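/- arXiv:1212.1424 — 4 statements merged into one kernel-verified Lean document; each statement's English description precedes it below -/
import Mathlib

section
/- Let Q be a connected Euclidean (affine) quiver, V a preprojective indecomposable representation, and X an indecomposable non-exceptional representation (i.e., Ext^1(X,X) ≠ 0). Then Hom(V,X) ≠ 0. -/
open Matrix BigOperators

/-- A finite quiver: `n` vertices, `a` arrows with source and target maps. -/
structure FinQuiver where
  n : ℕ
  a : ℕ
  src : Fin a → Fin n
  tgt : Fin a → Fin n

namespace FinQuiver

/-- A finite quiver is acyclic iff it admits a topological ordering of vertices. -/
def Acyclic (Q : FinQuiver) : Prop :=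
  ∃ h : Fin Q.n → ℕ, ∀ x, h (Q.src x) < h (Q.tgt x)

/-- Connectivity of the underlying graph. -/
def Connected (Q : FinQuiver) : Prop :=
  ∀ S : Finset (Fin Q.n), S.Nonempty → S ≠ Finset.univ →
    ∃ x, (Q.src x ∈ S ∧ Q.tgt x ∉ S) ∨ (Q.tgt x ∈ S ∧ Q.src x ∉ S)

/-- The Euler form ⟨d,e⟩ = Σ_i d_i e_i − Σ_{α : i → j} d_i e_j. -/
def euler (Q : FinQuiver) (d e : Fin Q.n → ℤ) : ℤ :=
  (∑ i, d i * e i) - ∑ x, d (Q.src x) * e (Q.tgt x)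

/-- A (possibly disconnected) Dynkin quiver: acyclic with positive definite Tits form. -/
def IsDynkin (Q : FinQuiver) : Prop :=
  Q.Acyclic ∧ ∀ d : Fin Q.n → ℤ, d ≠ 0 → 0 < Q.euler d d

/-- `δ` is the null root: positive, isotropic, and every isotropic vector is an
integer multiple of `δ`. -/
def IsNullRoot (Q : FinQuiver) (δ : Fin Q.n → ℤ) : Prop :=
  (∀ i, 0 < δ i) ∧ Q.euler δ δ = 0 ∧
    ∀ d : Fin Q.n → ℤ, Q.euler d d = 0 → ∃ m : ℤ, d = m • δ

/-- A Euclidean (affine) quiver: connected, acyclic, positive semidefinite Tits form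
with a null root. -/
def IsEuclidean (Q : FinQuiver) : Prop :=
  Q.Acyclic ∧ Q.Connected ∧ (∀ d, 0 ≤ Q.euler d d) ∧ ∃ δ, Q.IsNullRoot δ

end FinQuiver

/-- A finite-dimensional representation of `Q` over `k`: dimensions at each vertex,
and a matrix for each arrow. -/
structure QRep (k : Type) [Field k] (Q : FinQuiver) where
  d : Fin Q.n → ℕ
  mat : ∀ x : Fin Q.a, Matrix (Fin (d (Q.tgt x))) (Fin (d (Q.src x))) k

namespace QRep

variable {k : Type} [Field k] {Q : FinQuiver}

/-- The dimension vector of a representation, as an integer vector. -/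
def dimVec (M : QRep k Q) : Fin Q.n → ℤ := fun i => (M.d i : ℤ)

/-- The space of morphisms of representations `M → N`. -/
def homSpace (M N : QRep k Q) :
    Submodule k (∀ i, Matrix (Fin (N.d i)) (Fin (M.d i)) k) where
  carrier := {f | ∀ x, f (Q.tgt x) * M.mat x = N.mat x * f (Q.src x)}
  add_mem' := by
    intro f g hf hg x
    simp only [Pi.add_apply, Matrix.add_mul, Matrix.mul_add, hf x, hg x]
  zero_mem' := by intro x; simp
  smul_mem' := by
    intro c f hf x
    simp only [Pi.smul_apply, Matrix.smul_mul, Matrix.mul_smul, hf x]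

/-- The standard map whose kernel is `Hom(M,N)` and cokernel is `Ext¹(M,N)`. -/
def extMap (M N : QRep k Q) :
    (∀ i, Matrix (Fin (N.d i)) (Fin (M.d i)) k) →ₗ[k]
    (∀ x : Fin Q.a, Matrix (Fin (N.d (Q.tgt x))) (Fin (M.d (Q.src x))) k) where
  toFun f := fun x => f (Q.tgt x) * M.mat x - N.mat x * f (Q.src x)
  map_add' := by
    intro f g; funext x
    simp only [Pi.add_apply, Matrix.add_mul, Matrix.mul_add]
    abel
  map_smul' := by
    intro c f; funext x
    simp only [Pi.smul_apply, Matrix.smul_mul, Matrix.mul_smul, RingHom.id_apply,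
      smul_sub]

/-- dim_k Hom(M,N). -/
noncomputable def homDim (M N : QRep k Q) : ℕ :=
  Module.finrank k (homSpace M N)

/-- dim_k Ext¹(M,N), defined as the dimension of the cokernel of `extMap`. -/
noncomputable def extDim (M N : QRep k Q) : ℕ :=
  Module.finrank k
    ((∀ x : Fin Q.a, Matrix (Fin (N.d (Q.tgt x))) (Fin (M.d (Q.src x))) k) ⧸
      LinearMap.range (extMap M N))

/-- Isomorphism of representations. -/
def IsoRep (M N : QRep k Q) : Prop :=
  ∃ f ∈ homSpace M N, ∀ i, Function.Bijective (Matrix.mulVecLin (f i))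

/-- `L` is (the source of a monomorphism into) a subrepresentation of `M`. -/
def IsSubrep (L M : QRep k Q) : Prop :=
  ∃ f ∈ homSpace L M, ∀ i, Function.Injective (Matrix.mulVecLin (f i))

/-- `L` is a direct summand of `M` (split monomorphism with retraction). -/
def IsSummand (L M : QRep k Q) : Prop :=
  ∃ f ∈ homSpace L M, ∃ g ∈ homSpace M L, ∀ i, g i * f i = 1

/-- `M` is indecomposable: nonzero, and its endomorphism ring has no nontrivial
idempotents. -/
def Indec (M : QRep k Q) : Prop :=
  (∃ i, M.d i ≠ 0) ∧
    ∀ f ∈ homSpace M M, (∀ i, f i * f i = f i) → f = 0 ∨ f = 1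

/-- An exceptional representation: indecomposable and rigid. -/
def Exceptional (M : QRep k Q) : Prop :=
  Indec M ∧ extDim M M = 0

/-- `(f, g)` form a short exact sequence `0 → A → B → C → 0` of representations. -/
def IsSES (A B C : QRep k Q)
    (f : ∀ i, Matrix (Fin (B.d i)) (Fin (A.d i)) k)
    (g : ∀ i, Matrix (Fin (C.d i)) (Fin (B.d i)) k) : Prop :=
  f ∈ homSpace A B ∧ g ∈ homSpace B C ∧
    ∀ i, Function.Injective (Matrix.mulVecLin (f i)) ∧
      Function.Surjective (Matrix.mulVecLin (g i)) ∧
      LinearMap.range (Matrix.mulVecLin (f i)) = LinearMap.ker (Matrix.mulVecLin (g i))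

/-- A thick (= abelian and extension-closed, since rep(Q) is hereditary) full
subcategory: closed under isomorphism, direct summands and two-out-of-three for
short exact sequences. -/
def Thick (P : QRep k Q → Prop) : Prop :=
  (∀ M N, IsoRep M N → P M → P N) ∧
  (∀ L M, IsSummand L M → P M → P L) ∧
  (∀ A B C f g, IsSES A B C f g →
    ((P A → P B → P C) ∧ (P A → P C → P B) ∧ (P B → P C → P A)))

/-- `P` is the smallest thick subcategory containing `S`. -/
def GeneratedBy (P : QRep k Q → Prop) (S : Set (QRep k Q)) : Prop :=
  Thick P ∧ (∀ X ∈ S, P X) ∧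
    ∀ P' : QRep k Q → Prop, Thick P' → (∀ X ∈ S, P' X) → ∀ M, P M → P' M

/-- An exceptional sequence. -/
def ExcSeq {r : ℕ} (E : Fin r → QRep k Q) : Prop :=
  (∀ i, Exceptional (E i) ∧ homDim (E i) (E i) = 1) ∧
    ∀ i j : Fin r, i < j → homDim (E i) (E j) = 0 ∧ extDim (E i) (E j) = 0

/-- King's criterion for `⟨d,−⟩`-semi-stability. -/
def SemiStable (d : Fin Q.n → ℤ) (M : QRep k Q) : Prop :=
  Q.euler d M.dimVec = 0 ∧ ∀ L : QRep k Q, IsSubrep L M → Q.euler d L.dimVec ≤ 0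

/-- `M` is regular: every indecomposable summand pairs to zero with the null root. -/
def RegularRep (δ : Fin Q.n → ℤ) (M : QRep k Q) : Prop :=
  ∀ L, IsSummand L M → Indec L → Q.euler δ L.dimVec = 0

/-- `M` is in the right perpendicular category of `V`. -/
def RPerp (V M : QRep k Q) : Prop := homDim V M = 0 ∧ extDim V M = 0

/-- `M` is in the left perpendicular category of `V`. -/
def LPerp (V M : QRep k Q) : Prop := homDim M V = 0 ∧ extDim M V = 0

/-- `P` is a projective representation (Ext¹(P,−) = 0). -/
def IsProjRep (P : QRep k Q) : Prop := ∀ M : QRep k Q, extDim P M = 0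

end QRep

/-- `α` is a Schur root: the dimension vector of an indecomposable representation
with trivial endomorphism ring. -/
def IsSchurRoot (k : Type) [Field k] (Q : FinQuiver) (α : Fin Q.n → ℤ) : Prop :=
  ∃ M : QRep k Q, M.dimVec = α ∧ QRep.Indec M ∧ QRep.homDim M M = 1

/-- `ext(α,β) = 0`: some representations of these dimension vectors have no
extensions. -/
def ExtZero (k : Type) [Field k] (Q : FinQuiver) (α β : Fin Q.n → ℤ) : Prop :=
  ∃ M N : QRep k Q, M.dimVec = α ∧ N.dimVec = β ∧ QRep.extDim M N = 0

/-- Kac's characterization of the canonical decomposition: `c` is the canonical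
decomposition of `d` iff the entries sum to `d`, are Schur roots, and are pairwise
ext-orthogonal. -/
def IsCanonDecomp (k : Type) [Field k] (Q : FinQuiver) (d : Fin Q.n → ℤ)
    (c : List (Fin Q.n → ℤ)) : Prop :=
  c.sum = d ∧ (∀ α ∈ c, IsSchurRoot k Q α) ∧
    ∀ i j : Fin c.length, i ≠ j → ExtZero k Q (c.get i) (c.get j)

/-- Representations on abstract finite-dimensional vector spaces. -/
structure ARep (k : Type) [Field k] (Q : FinQuiver) where
  V : Fin Q.n → Type
  [acg : ∀ i, AddCommGroup (V i)]
  [mod : ∀ i, Module k (V i)]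
  [fd : ∀ i, FiniteDimensional k (V i)]
  A : ∀ x, V (Q.src x) →ₗ[k] V (Q.tgt x)

namespace ARep

attribute [instance] ARep.acg ARep.mod ARep.fd

variable {k : Type} [Field k] {Q : FinQuiver}

/-- Families of linear maps. -/
abbrev Fam (M N : ARep k Q) := ∀ i, M.V i →ₗ[k] N.V i

/-- Morphisms. -/
def IsHom (M N : ARep k Q) (f : Fam M N) : Prop :=
  ∀ x v, f (Q.tgt x) (M.A x v) = N.A x (f (Q.src x) v)

/-- The standard map. -/
def D (M N : ARep k Q) : Fam M N →ₗ[k] (∀ x, M.V (Q.src x) →ₗ[k] N.V (Q.tgt x)) where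
  toFun f := fun x => f (Q.tgt x) ∘ₗ M.A x - N.A x ∘ₗ f (Q.src x)
  map_add' := by
    intro f g; ext x v; simp; abel
  map_smul' := by
    intro c f; ext x v; simp [smul_sub]

lemma D_apply (M N : ARep k Q) (f : Fam M N) (x) (v) :
    D M N f x v = f (Q.tgt x) (M.A x v) - N.A x (f (Q.src x) v) := by
  simp [D]

lemma isHom_iff (M N : ARep k Q) (f : Fam M N) : IsHom M N f ↔ D M N f = 0 := by
  constructor
  · intro h; ext x v; rw [D_apply, h x v]; simp
  · intro h x v
    have := D_apply M N f x v
    rw [h] at this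
    exact (sub_eq_zero.mp this.symm)

/-- Vanishing of Ext. -/
def ExtZ (M N : ARep k Q) : Prop := LinearMap.range (D M N) = ⊤

/-- Dimension vector. -/
noncomputable def dv (M : ARep k Q) : Fin Q.n → ℤ := fun i => (Module.finrank k (M.V i) : ℤ)

/-- Total dimension. -/
noncomputable def tdim (M : ARep k Q) : ℕ := ∑ i, Module.finrank k (M.V i)

/-- Indecomposability. -/
def Ind (M : ARep k Q) : Prop :=
  (∃ i, ∃ v : M.V i, v ≠ 0) ∧
    ∀ f : Fam M M, IsHom M M f → (∀ i v, f i (f i v) = f i v) →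
      (∀ i v, f i v = 0) ∨ (∀ i v, f i v = v)

lemma finrank_fam (M N : ARep k Q) :
    (Module.finrank k (Fam M N) : ℤ) = ∑ i, M.dv i * N.dv i := by
  rw [Module.finrank_pi_fintype]
  simp [Module.finrank_linearMap, dv]

lemma finrank_arr (M N : ARep k Q) :
    (Module.finrank k (∀ x, M.V (Q.src x) →ₗ[k] N.V (Q.tgt x)) : ℤ)
      = ∑ x, M.dv (Q.src x) * N.dv (Q.tgt x) := by
  rw [Module.finrank_pi_fintype]
  simp [Module.finrank_linearMap, dv]

lemma exists_hom (M N : ARep k Q) (h : 0 < Q.euler M.dv N.dv) :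
    ∃ f : Fam M N, f ≠ 0 ∧ IsHom M N f := by
  have h1 := finrank_fam M N
  have h2 := finrank_arr M N
  unfold FinQuiver.euler at h
  have hlt : Module.finrank k (∀ x, M.V (Q.src x) →ₗ[k] N.V (Q.tgt x))
      < Module.finrank k (Fam M N) := by
    zify; rw [h1, h2]; linarith
  have := LinearMap.ker_ne_bot_of_finrank_lt (f := D M N) hlt
  obtain ⟨f, hf, hf0⟩ := Submodule.exists_mem_ne_zero_of_ne_bot this
  exact ⟨f, hf0, (isHom_iff _ _ _).2 hf⟩

lemma two_le_end (M : ARep k Q) (h : 0 < Q.euler M.dv M.dv) (he : ¬ ExtZ M M) :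
    2 ≤ Module.finrank k (LinearMap.ker (D M M)) := by
  have h1 := finrank_fam M M
  have h2 := finrank_arr M M
  unfold FinQuiver.euler at h
  have h3 := LinearMap.finrank_range_add_finrank_ker (D M M)
  have h4 : Module.finrank k (LinearMap.range (D M M)) <
      Module.finrank k (∀ x, M.V (Q.src x) →ₗ[k] M.V (Q.tgt x)) :=
    Submodule.finrank_lt he
  zify at *
  linarith

lemma IsHom.comp {M N L : ARep k Q} {f : Fam M N} {g : Fam N L} (hg : IsHom N L g)
    (hf : IsHom M N f) : IsHom M L (fun i => g i ∘ₗ f i) := by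
  intro x v; simp [hf x v, hg x]

/-- Subrepresentation. -/
abbrev sub (M : ARep k Q) (U : ∀ i, Submodule k (M.V i))
    (h : ∀ x v, v ∈ U (Q.src x) → M.A x v ∈ U (Q.tgt x)) : ARep k Q where
  V i := U i
  A x := (M.A x).restrict (fun v hv => h x v hv)

/-- Kernel. -/
abbrev kerRep (M N : ARep k Q) (f : Fam M N) (hf : IsHom M N f) : ARep k Q :=
  M.sub (fun i => LinearMap.ker (f i)) (by intro x v hv; simp_all [hf x v])

/-- Image. -/
abbrev imRep (M N : ARep k Q) (f : Fam M N) (hf : IsHom M N f) : ARep k Q :=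
  N.sub (fun i => LinearMap.range (f i)) (by
    rintro x _ ⟨v, rfl⟩; exact ⟨_, hf x v⟩)

/-- Total rank. -/
noncomputable def trank {M N : ARep k Q} (f : Fam M N) : ℕ :=
  ∑ i, Module.finrank k (LinearMap.range (f i))

lemma factor {U V W : Type} [AddCommGroup U] [AddCommGroup V] [AddCommGroup W]
    [Module k U] [Module k V] [Module k W] (f : U →ₗ[k] V) (g : U →ₗ[k] W)
    (h : ∀ u, f u = 0 → g u = 0) : ∃ d : V →ₗ[k] W, ∀ u, d (f u) = g u := by
  have hle : LinearMap.ker f ≤ LinearMap.ker g := fun u hu => h u hu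
  obtain ⟨d, hd⟩ := LinearMap.exists_extend
    ((LinearMap.ker f).liftQ g hle ∘ₗ f.quotKerEquivRange.symm.toLinearMap)
  refine ⟨d, fun u => ?_⟩
  have := LinearMap.congr_fun hd ⟨f u, u, rfl⟩
  simp only [LinearMap.comp_apply, Submodule.subtype_apply] at this
  rw [this]
  have h2 : f.quotKerEquivRange.symm ⟨f u, u, rfl⟩ = Submodule.Quotient.mk u := by
    rw [LinearEquiv.symm_apply_eq]; ext; simp
  simp [h2]

/-- From a nonscalar endomorphism get a nonzero noninjective one. -/
lemma exists_noninj [IsAlgClosed k] (M : ARep k Q) (hM : ∃ i, ∃ v : M.V i, v ≠ 0)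
    (h : 2 ≤ Module.finrank k (LinearMap.ker (D M M))) :
    ∃ f : Fam M M, IsHom M M f ∧ f ≠ 0 ∧ ∃ i, ∃ v : M.V i, v ≠ 0 ∧ f i v = 0 := by
  obtain ⟨i, v, hv⟩ := hM
  have hid : IsHom M M (fun i => LinearMap.id) := fun x v => rfl
  by_contra hcon
  push Not at hcon
  have : Module.finrank k (LinearMap.ker (D M M)) ≤ 1 := by
    refine finrank_le_one ⟨fun i => LinearMap.id, (isHom_iff _ _ _).1 hid⟩ ?_
    rintro ⟨f, hf⟩
    have : Nontrivial (M.V i) := ⟨v, 0, hv⟩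
    obtain ⟨c, hc⟩ := Module.End.exists_eigenvalue (f i)
    obtain ⟨w, hw⟩ := hc.exists_hasEigenvector
    refine ⟨c, ?_⟩
    have hg : D M M (f - c • (fun i => LinearMap.id : Fam M M)) = 0 := by
      rw [map_sub, map_smul, (isHom_iff _ _ _).1 hid, LinearMap.mem_ker.1 hf]; simp
    by_contra hne
    refine hcon _ ((isHom_iff _ _ _).2 hg) ?_ i w hw.2 ?_
    · intro h0
      apply hne
      ext1
      exact (sub_eq_zero.1 h0).symm
    · have := hw.apply_eq_smul
      simp [this]
  omega

lemma sum_eq_of_le {n : ℕ} {a b : Fin n → ℕ} (h : ∀ i, a i ≤ b i) (h2 : ∑ i, b i ≤ ∑ i, a i) :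
    ∀ i, a i = b i := by
  have := (Finset.sum_eq_sum_iff_of_le (s := Finset.univ) (fun i _ => h i)).1
    (le_antisymm (Finset.sum_le_sum fun i _ => h i) h2)
  intro i; exact this i (Finset.mem_univ i)

lemma sq_zero (M : ARep k Q) (hM : Ind M) (θ : Fam M M) (hθ : IsHom M M θ) (h0 : θ ≠ 0)
    (hmin : ∀ φ : Fam M M, IsHom M M φ → φ ≠ 0 → trank θ ≤ trank φ)
    (hk : ∃ i, ∃ v : M.V i, v ≠ 0 ∧ θ i v = 0) : ∀ i v, θ i (θ i v) = 0 := by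
  by_contra hcon
  have hne : (fun i => θ i ∘ₗ θ i) ≠ (0 : Fam M M) := by
    intro h; apply hcon; intro i v
    exact LinearMap.congr_fun (congrFun h i) v
  have hr := hmin _ (hθ.comp hθ) hne
  have hle : ∀ i, LinearMap.range (θ i ∘ₗ θ i) ≤ LinearMap.range (θ i) :=
    fun i => LinearMap.range_comp_le_range _ _
  have heq := sum_eq_of_le (fun i => Submodule.finrank_mono (hle i)) hr
  have hker : ∀ i, LinearMap.ker (θ i) = LinearMap.ker (θ i ∘ₗ θ i) := by
    intro i
    apply Submodule.eq_of_le_of_finrank_eq (LinearMap.ker_le_ker_comp _ _)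
    have h1 := LinearMap.finrank_range_add_finrank_ker (θ i)
    have h2 := LinearMap.finrank_range_add_finrank_ker (θ i ∘ₗ θ i)
    have h3 := heq i
    omega
  have hc : ∀ i, IsCompl (LinearMap.range (θ i)) (LinearMap.ker (θ i)) := by
    intro i
    rw [Submodule.isCompl_iff_disjoint]
    · rw [Submodule.disjoint_def]
      rintro _ ⟨v, rfl⟩ hv
      have : v ∈ LinearMap.ker (θ i ∘ₗ θ i) := hv
      rw [← hker i] at this
      exact this
    · exact (LinearMap.finrank_range_add_finrank_ker (θ i)).ge
  let P : Fam M M := fun i => (LinearMap.range (θ i)).projection _ (hc i)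
  have hPl : ∀ i v, P i (θ i v) = θ i v := fun i v =>
    Submodule.projection_apply_of_mem_left (hc i) ⟨v, rfl⟩
  have hPr : ∀ i v, θ i v = 0 → P i v = 0 := fun i v hv =>
    (Submodule.projection_apply_eq_zero_iff (hc i)).2 hv
  have hPm : ∀ i v, ∃ w, P i v = θ i w := fun i v => by
    obtain ⟨w, hw⟩ := Submodule.projection_apply_mem (hc i) v
    exact ⟨w, hw.symm⟩
  have hPi : ∀ i v, P i (P i v) = P i v := by
    intro i v
    obtain ⟨w, hw⟩ := hPm i v
    rw [hw, hPl]
  have hPk : ∀ i v, θ i (v - P i v) = 0 := by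
    intro i v
    have : P i (v - P i v) = 0 := by rw [map_sub, hPi, sub_self]
    exact (Submodule.projection_apply_eq_zero_iff (hc i)).1 this
  have hPh : IsHom M M P := by
    intro x v
    have e1 : P _ (M.A x (v - P _ v)) = 0 := by
      apply hPr; rw [hθ, hPk, map_zero]
    rw [map_sub, map_sub, sub_eq_zero] at e1
    rw [e1]
    obtain ⟨w, hw⟩ := hPm _ v
    rw [hw, ← hθ, hPl]
  rcases hM.2 P hPh hPi with h | h
  · apply h0
    ext i v
    rw [← hPl, h]; rfl
  · obtain ⟨i, v, hv, hv0⟩ := hk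
    exact hv (by rw [← h i v, hPr i v hv0])

/-- `K` is a summand of the kernel of `θ` meeting the image of `θ`. -/
def Good (M : ARep k Q) (θ : Fam M M) (hθ : IsHom M M θ) (hsq : ∀ i v, θ i (θ i v) = 0)
    (K : ARep k Q) : Prop :=
  ∃ ι : Fam K (kerRep M M θ hθ), IsHom _ _ ι ∧ ∃ π : Fam (kerRep M M θ hθ) K, IsHom _ _ π ∧
    (∀ i v, π i (ι i v) = v) ∧ ∃ i v, π i ⟨θ i v, hsq i v⟩ ≠ 0

lemma step [IsAlgClosed k] (M : ARep k Q) (hM : Ind M) (he : ¬ ExtZ M M)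
    (hq : 0 < Q.euler M.dv M.dv) :
    ∃ K : ARep k Q, tdim K < tdim M ∧ Ind K ∧ ¬ ExtZ K K ∧
      ∃ j : Fam K M, IsHom K M j ∧ ∀ i, Function.Injective (j i) := by
  classical
  obtain ⟨f, hf, hf0, hfk⟩ := exists_noninj M hM.1 (two_le_end M hq he)
  have hex : ∃ r, ∃ θ : Fam M M, IsHom M M θ ∧ θ ≠ 0 ∧ trank θ = r := ⟨_, f, hf, hf0, rfl⟩
  obtain ⟨θ, hθ, hθ0, hθr⟩ := Nat.find_spec hex
  have hmin : ∀ φ : Fam M M, IsHom M M φ → φ ≠ 0 → trank θ ≤ trank φ := by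
    intro φ h1 h2
    rw [hθr]
    exact Nat.find_min' hex ⟨φ, h1, h2, rfl⟩
  have hk : ∃ i, ∃ v : M.V i, v ≠ 0 ∧ θ i v = 0 := by
    by_contra hcon
    push Not at hcon
    have hinj : ∀ i, LinearMap.ker (θ i) = ⊥ := by
      intro i; rw [LinearMap.ker_eq_bot']; intro v hv
      by_contra h; exact hcon i v h hv
    have h1 := hmin f hf hf0
    have h2 : ∀ i, Module.finrank k (LinearMap.range (f i))
        ≤ Module.finrank k (LinearMap.range (θ i)) := by
      intro i
      rw [LinearMap.finrank_range_of_inj (LinearMap.ker_eq_bot.1 (hinj i))]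
      exact LinearMap.finrank_range_le _
    have h3 := sum_eq_of_le h2 h1
    obtain ⟨i, v, hv, hv0⟩ := hfk
    have h4 := h3 i
    rw [LinearMap.finrank_range_of_inj (LinearMap.ker_eq_bot.1 (hinj i))] at h4
    have h5 := LinearMap.finrank_range_add_finrank_ker (f i)
    have h6 : Module.finrank k (LinearMap.ker (f i)) = 0 := by omega
    rw [Submodule.finrank_eq_zero] at h6
    exact hv ((LinearMap.ker_eq_bot'.1 h6) v hv0)
  have hsq := sq_zero M hM θ hθ hθ0 hmin hk
  have hnz : ∃ i v, θ i v ≠ 0 := by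
    by_contra hcon; push Not at hcon
    apply hθ0; ext i v; exact hcon i v
  have hex2 : ∃ r, ∃ K : ARep k Q, Good M θ hθ hsq K ∧ tdim K = r := by
    refine ⟨_, kerRep M M θ hθ, ⟨fun i => LinearMap.id, fun x v => rfl, fun i => LinearMap.id,
      fun x v => rfl, fun i v => rfl, ?_⟩, rfl⟩
    obtain ⟨i, v, hv⟩ := hnz
    exact ⟨i, v, fun h => hv (congrArg Subtype.val h)⟩
  obtain ⟨K, ⟨ι, hι, π, hπ, hπι, i0, v0, hv0⟩, hKr⟩ := Nat.find_spec hex2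
  have hminK : ∀ L, Good M θ hθ hsq L → tdim K ≤ tdim L := by
    intro L hL; rw [hKr]; exact Nat.find_min' hex2 ⟨L, hL, rfl⟩
  -- inclusion of K in M
  let j : Fam K M := fun i => (LinearMap.ker (θ i)).subtype ∘ₗ ι i
  have hj : IsHom K M j := by
    intro x v
    change ((ι _ (K.A x v)).1 : M.V _) = _
    rw [hι x v]; rfl
  have hιinj : ∀ i, Function.Injective (ι i) := fun i =>
    Function.LeftInverse.injective (hπι i)
  have hjinj : ∀ i, Function.Injective (j i) := fun i =>
    Subtype.val_injective.comp (hιinj i)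
  have hjθ : ∀ i v, θ i (j i v) = 0 := fun i v => (ι i v).2
  -- beta
  let β : Fam M K := fun i => π i ∘ₗ (θ i).codRestrict (LinearMap.ker (θ i)) (hsq i)
  have hβ : IsHom M K β := by
    intro x v
    change π _ _ = K.A x (π _ _)
    rw [← hπ]
    congr 1
    exact Subtype.ext (hθ x v)
  have hβ0 : β i0 v0 ≠ 0 := hv0
  have hβk : ∀ i v, θ i v = 0 → β i v = 0 := by
    intro i v hv
    change π i _ = 0
    have : (θ i).codRestrict (LinearMap.ker (θ i)) (hsq i) v = 0 := Subtype.ext hv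
    exact (congrArg (π i) this).trans (map_zero _)
  have hKind : Ind K := by
    refine ⟨⟨i0, _, hβ0⟩, ?_⟩
    have key : ∀ f : Fam K K, IsHom K K f → (∀ i v, f i (f i v) = f i v) →
        f i0 (β i0 v0) ≠ 0 → ∀ i v, f i v = v := by
      intro f hf hff hne
      have hle := hminK (imRep K K f hf) (by
        refine ⟨fun i => ι i ∘ₗ (LinearMap.range (f i)).subtype, ?_,
          fun i => (f i).rangeRestrict ∘ₗ π i, ?_, ?_, i0, v0, ?_⟩
        · intro x v
          exact hι x v.1
        · intro x v
          apply Subtype.ext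
          change f _ (π _ _) = K.A x (f _ (π _ v))
          rw [hπ, hf]
        · rintro i ⟨_, v, rfl⟩
          apply Subtype.ext
          exact (congrArg (f i) (hπι i (f i v))).trans (hff i v)
        · intro h
          exact hne (congrArg Subtype.val h))
      have h3 := sum_eq_of_le (a := fun i => Module.finrank k (LinearMap.range (f i)))
        (b := fun i => Module.finrank k (K.V i))
        (fun i => Submodule.finrank_le _) hle
      intro i v
      have : LinearMap.range (f i) = ⊤ := Submodule.eq_top_of_finrank_eq (h3 i)
      obtain ⟨w, rfl⟩ := LinearMap.range_eq_top.1 this v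
      exact hff i w
    intro f hf hff
    by_cases hne : f i0 (β i0 v0) = 0
    · left
      have := key (fun i => LinearMap.id - f i) (by intro x v; simp [hf x v])
        (by intro i v; simp [hff]) (by simpa [hne] using hβ0)
      intro i v
      simpa using this i v
    · right; exact key f hf hff hne
  have hkerβ : ∀ i v, β i v = 0 → θ i v = 0 := by
    have h1 := hmin (fun i => j i ∘ₗ β i) (hj.comp hβ) (by
      intro h
      have h2 := LinearMap.congr_fun (congrFun h i0) v0
      exact hβ0 (hjinj i0 (by simpa using h2)))
    have hle : ∀ i, LinearMap.ker (θ i) ≤ LinearMap.ker (j i ∘ₗ β i) := by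
      intro i v hv
      simp [hβk i v hv]
    have h2 : ∀ i, Module.finrank k (LinearMap.range (j i ∘ₗ β i)) ≤
        Module.finrank k (LinearMap.range (θ i)) := by
      intro i
      have a1 := LinearMap.finrank_range_add_finrank_ker (θ i)
      have a2 := LinearMap.finrank_range_add_finrank_ker (j i ∘ₗ β i)
      have a3 := Submodule.finrank_mono (hle i)
      omega
    have h3 := sum_eq_of_le h2 h1
    intro i v hv
    have h4 : LinearMap.ker (θ i) = LinearMap.ker (j i ∘ₗ β i) := by
      apply Submodule.eq_of_le_of_finrank_eq (hle i)
      have a1 := LinearMap.finrank_range_add_finrank_ker (θ i)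
      have a2 := LinearMap.finrank_range_add_finrank_ker (j i ∘ₗ β i)
      have a3 := h3 i
      omega
    have : v ∈ LinearMap.ker (j i ∘ₗ β i) := by simp [hv]
    rw [← h4] at this
    exact this
  refine ⟨K, ?_, hKind, ?_, j, hj, hjinj⟩
  · obtain ⟨i, v, hv, hv0⟩ := hk
    obtain ⟨i1, v1, hv1⟩ := hnz
    refine Finset.sum_lt_sum (fun i _ => LinearMap.finrank_le_finrank_of_injective (hjinj i))
      ⟨i1, Finset.mem_univ _, ?_⟩
    refine lt_of_le_of_ne (LinearMap.finrank_le_finrank_of_injective (hjinj i1)) ?_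
    intro heq
    obtain ⟨w, rfl⟩ := (LinearMap.injective_iff_surjective_of_finrank_eq_finrank heq).1
      (hjinj i1) v1
    exact hv1 (hjθ i1 w)
  · intro hext
    -- extend π to M
    have hs : ∀ i, ∃ s : M.V i →ₗ[k] K.V i, s ∘ₗ (LinearMap.ker (θ i)).subtype = π i :=
      fun i => LinearMap.exists_extend (π i)
    choose s hs using hs
    have hs' : ∀ i v (hv : θ i v = 0), s i v = π i ⟨v, hv⟩ := fun i v hv =>
      LinearMap.congr_fun (hs i) ⟨v, hv⟩
    have hd : ∀ x, ∃ d : K.V (Q.src x) →ₗ[k] K.V (Q.tgt x),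
        ∀ u, d (β _ u) = D M K s x u := by
      intro x
      apply factor
      intro u hu
      have hu' := hkerβ _ _ hu
      rw [D_apply, hs' _ u hu', hs' _ (M.A x u) (by rw [hθ, hu', map_zero]), sub_eq_zero]
      exact hπ x ⟨u, hu'⟩
    choose d hd using hd
    have hd2 : d ∈ LinearMap.range (D K K) := by rw [hext]; trivial
    obtain ⟨g, rfl⟩ := hd2
    let r : Fam M K := fun i => s i - g i ∘ₗ β i
    have hr : IsHom M K r := by
      intro x v
      have h1 := hd x v
      rw [D_apply, D_apply] at h1
      simp only [r, LinearMap.sub_apply, LinearMap.comp_apply, map_sub]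
      rw [hβ x v, sub_eq_sub_iff_sub_eq_sub, ← h1]
    have hrj : ∀ i v, r i (j i v) = v := by
      intro i v
      simp only [r, LinearMap.sub_apply, LinearMap.comp_apply]
      rw [hβk i _ (hjθ i v), map_zero, sub_zero, hs' i _ (hjθ i v)]
      exact hπι i v
    rcases hM.2 (fun i => j i ∘ₗ r i) (hj.comp hr) (by intro i v; simp [hrj]) with h | h
    · have h1 := h i0 (j i0 (β i0 v0))
      simp only [LinearMap.comp_apply, hrj] at h1
      exact hβ0 (hjinj i0 (by rw [h1, map_zero]))
    · obtain ⟨i1, v1, hv1⟩ := hnz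
      apply hv1
      rw [← h i1 v1]
      exact hjθ i1 _

lemma exists_sub [IsAlgClosed k] (m : ℕ) : ∀ (M : ARep k Q), tdim M ≤ m → Ind M → ¬ ExtZ M M →
    ∃ L : ARep k Q, (∃ i, ∃ v : L.V i, v ≠ 0) ∧ Q.euler L.dv L.dv ≤ 0 ∧
      ∃ j : Fam L M, IsHom L M j ∧ ∀ i, Function.Injective (j i) := by
  induction m with
  | zero =>
    intro M hm hM _
    obtain ⟨i, v, hv⟩ := hM.1
    exfalso
    have h1 : tdim M = 0 := by omega
    have h2 := (Finset.sum_eq_zero_iff.1 h1) i (Finset.mem_univ i)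
    have := Module.finrank_zero_iff.1 h2
    exact hv (Subsingleton.elim _ _)
  | succ m ih =>
    intro M hm hM he
    by_cases hq : 0 < Q.euler M.dv M.dv
    · obtain ⟨K, h1, h2, h3, j, hj, hji⟩ := step M hM he hq
      obtain ⟨L, a1, a2, j', hj', hji'⟩ := ih K (by omega) h2 h3
      exact ⟨L, a1, a2, _, hj.comp hj', fun i => (hji i).comp (hji' i)⟩
    · exact ⟨M, hM.1, not_lt.1 hq, fun i => LinearMap.id, fun x v => rfl,
        fun i => Function.injective_id⟩

/-- The abstract representation of a matrix representation. -/
abbrev ofQ (M : QRep k Q) : ARep k Q where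
  V i := Fin (M.d i) → k
  A x := Matrix.toLin' (M.mat x)

lemma ofQ_dv (M : QRep k Q) : (ofQ M).dv = M.dimVec := by
  funext i
  change ((Module.finrank k (Fin (M.d i) → k) : ℕ) : ℤ) = _
  simp [QRep.dimVec]

/-- Matrices of a family. -/
def toM {M N : QRep k Q} (f : Fam (ofQ M) (ofQ N)) (i : Fin Q.n) :
    Matrix (Fin (N.d i)) (Fin (M.d i)) k :=
  LinearMap.toMatrix' (f i : (Fin (M.d i) → k) →ₗ[k] (Fin (N.d i) → k))

lemma toM_spec {M N : QRep k Q} (f : Fam (ofQ M) (ofQ N)) (i : Fin Q.n) (v : Fin (M.d i) → k) :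
    (toM f i).mulVec v = f i v :=
  LinearMap.toMatrix'_mulVec (f i : (Fin (M.d i) → k) →ₗ[k] (Fin (N.d i) → k)) v

lemma mat_ext {a b : ℕ} (A B : Matrix (Fin a) (Fin b) k) (h : ∀ v, A.mulVec v = B.mulVec v) :
    A = B := (Matrix.toLin' (R := k)).injective (LinearMap.ext h)

lemma toMatrix_mem (M N : QRep k Q) (f : Fam (ofQ M) (ofQ N)) (hf : IsHom _ _ f) :
    toM f ∈ QRep.homSpace M N := by
  intro x
  apply mat_ext
  intro v
  rw [← Matrix.mulVec_mulVec, ← Matrix.mulVec_mulVec]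
  exact (toM_spec f _ _).trans ((hf x v).trans
    (congrArg (N.mat x).mulVec (toM_spec f _ v).symm))

lemma ofQ_ind (M : QRep k Q) (h : QRep.Indec M) : Ind (ofQ M) := by
  obtain ⟨⟨i, hi⟩, h2⟩ := h
  refine ⟨⟨i, fun _ => (1 : k), ?_⟩, ?_⟩
  · intro h0
    exact one_ne_zero (congrFun h0 ⟨0, Nat.pos_of_ne_zero hi⟩)
  · intro f hf hff
    rcases h2 _ (toMatrix_mem M M f hf) (by
      intro i
      apply mat_ext
      intro v
      rw [← Matrix.mulVec_mulVec]
      exact (toM_spec f _ _).trans ((congrArg (f i) (toM_spec f i v)).trans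
        ((hff i v).trans (toM_spec f i v).symm))) with h | h
    · left
      intro i v
      have h4 := toM_spec f i v
      rw [h] at h4
      exact h4.symm.trans (Matrix.zero_mulVec v)
    · right
      intro i v
      have h4 := toM_spec f i v
      rw [h] at h4
      exact h4.symm.trans (Matrix.one_mulVec v)

lemma ofQ_ext (M : QRep k Q) (h : QRep.extDim M M ≠ 0) : ¬ ExtZ (ofQ M) (ofQ M) := by
  intro he
  apply h
  unfold QRep.extDim
  have : LinearMap.range (QRep.extMap M M) = ⊤ := by
    rw [LinearMap.range_eq_top]
    intro c
    have hc : (fun x => Matrix.toLin' (c x)) ∈ LinearMap.range (D (ofQ M) (ofQ M)) := by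
      rw [he]; trivial
    obtain ⟨g, hg⟩ := hc
    refine ⟨toM g, ?_⟩
    funext x
    apply mat_ext
    intro v
    have h1 := LinearMap.congr_fun (congrFun hg x) v
    rw [D_apply] at h1
    refine Eq.trans ?_ h1
    simp only [QRep.extMap, LinearMap.coe_mk, AddHom.coe_mk]
    rw [Matrix.sub_mulVec, ← Matrix.mulVec_mulVec, ← Matrix.mulVec_mulVec]
    exact congrArg₂ (· - ·) (toM_spec g _ _) (congrArg (M.mat x).mulVec (toM_spec g _ v))
  rw [this]
  have : Subsingleton ((∀ x : Fin Q.a, Matrix (Fin (M.d (Q.tgt x))) (Fin (M.d (Q.src x))) k) ⧸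
      (⊤ : Submodule k (∀ x : Fin Q.a, Matrix (Fin (M.d (Q.tgt x))) (Fin (M.d (Q.src x))) k))) :=
    Submodule.Quotient.subsingleton_iff.2 rfl
  exact Module.finrank_zero_of_subsingleton

end ARep

lemma euler_lin_left (Q : FinQuiver) (m : ℤ) (a b c : Fin Q.n → ℤ) :
    Q.euler (m • a + b) c = m * Q.euler a c + Q.euler b c := by
  simp only [FinQuiver.euler, Pi.add_apply, Pi.smul_apply, smul_eq_mul, add_mul, mul_assoc,
    Finset.sum_add_distrib, ← Finset.mul_sum]
  ring

lemma euler_lin_right (Q : FinQuiver) (m : ℤ) (a b c : Fin Q.n → ℤ) :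
    Q.euler c (m • a + b) = m * Q.euler c a + Q.euler c b := by
  simp only [FinQuiver.euler, Pi.add_apply, Pi.smul_apply, smul_eq_mul, mul_add, mul_left_comm _ m,
    Finset.sum_add_distrib, ← Finset.mul_sum]
  ring

lemma euler_symm_null (Q : FinQuiver) (h : ∀ d, 0 ≤ Q.euler d d) (δ v : Fin Q.n → ℤ)
    (hδ : Q.euler δ δ = 0) : Q.euler δ v + Q.euler v δ = 0 := by
  set B := Q.euler δ v + Q.euler v δ with hB
  set q := Q.euler v v with hq
  have hq0 : 0 ≤ q := h v
  have h1 := h ((-(q + 1) * B) • δ + v)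
  rw [euler_lin_left, euler_lin_right, euler_lin_right, hδ] at h1
  have h2 : 0 ≤ -(q + 1) * B * B + q := by rw [hB] at h1 ⊢; linarith
  by_contra hne
  have : 1 ≤ B * B := by
    have := mul_self_pos.2 hne
    omega
  nlinarith

open QRep in
/-- over a Euclidean quiver, if `V` is a preprojective indecomposable
(⟨δ, dim V⟩ < 0) and `X` an indecomposable non-exceptional representation, then
Hom(V,X) ≠ 0. -/
theorem hom_ne_zero_of_preprojective (k : Type) [Field k] [IsAlgClosed k]
    (Q : FinQuiver) (hQ : Q.IsEuclidean) (δ : Fin Q.n → ℤ) (hδ : Q.IsNullRoot δ)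
    (V X : QRep k Q) (hV : Indec V) (hVpp : Q.euler δ V.dimVec < 0)
    (hX : Indec X) (hXne : extDim X X ≠ 0) :
    homDim V X ≠ 0 := by
  obtain ⟨L, ⟨i, v, hv⟩, hq, j, hj, hji⟩ :=
    ARep.exists_sub _ (ARep.ofQ X) le_rfl (ARep.ofQ_ind X hX) (ARep.ofQ_ext X hXne)
  obtain ⟨hpos, hiso, hmul⟩ := hδ
  obtain ⟨m, hm⟩ := hmul _ (le_antisymm hq (hQ.2.2.1 _))
  have hLi : 0 < L.dv i := by
    have : Nontrivial (L.V i) := ⟨v, 0, hv⟩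
    have : 0 < Module.finrank k (L.V i) := Module.finrank_pos
    simpa [ARep.dv] using this
  have hm0 : 0 < m := by
    rw [hm, Pi.smul_apply, smul_eq_mul] at hLi
    exact pos_of_mul_pos_left hLi (hpos i).le
  have hsymm := euler_symm_null Q hQ.2.2.1 δ V.dimVec hiso
  have he : 0 < Q.euler (ARep.ofQ V).dv L.dv := by
    rw [ARep.ofQ_dv, hm]
    have h1 := euler_lin_right Q m δ 0 V.dimVec
    have h2 : Q.euler V.dimVec 0 = 0 := by simp [FinQuiver.euler]
    rw [add_zero, h2, add_zero] at h1
    rw [h1]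
    apply mul_pos hm0
    linarith
  obtain ⟨f, hf0, hf⟩ := ARep.exists_hom _ _ he
  have hmem := ARep.toMatrix_mem V X _ (hj.comp hf)
  intro h0
  have hbot : homSpace V X = ⊥ := Submodule.finrank_eq_zero.1 h0
  rw [hbot, Submodule.mem_bot] at hmem
  apply hf0
  funext i
  apply LinearMap.ext
  intro w
  apply hji i
  have h1 := ARep.toM_spec (fun i => j i ∘ₗ f i : ARep.Fam (ARep.ofQ V) (ARep.ofQ X)) i w
  rw [hmem] at h1
  refine Eq.trans (h1.symm.trans (Matrix.zero_mulVec w)) ?_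
  exact (map_zero (j i)).symm
end

section
/- Let Q be a connected Euclidean quiver, V a preinjective indecomposable representation, and X an indecomposable non-exceptional representation. Then Ext^1(V,X) ≠ 0. -/
open Matrix BigOperators

namespace QRep

variable {k : Type} [Field k] {Q : FinQuiver}

/-- rank factorization of a matrix. -/
theorem rank_fact {n m : ℕ} (A : Matrix (Fin n) (Fin m) k) :
    ∃ c : ℕ, ∃ (p : Matrix (Fin c) (Fin m) k) (j : Matrix (Fin n) (Fin c) k)
      (s : Matrix (Fin m) (Fin c) k) (r : Matrix (Fin c) (Fin n) k),
      A = j * p ∧ p * s = 1 ∧ r * j = 1 := by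
  let T := Matrix.toLin' A
  let e : LinearMap.range T ≃ₗ[k] (Fin (Module.finrank k (LinearMap.range T)) → k) :=
    (Module.finBasis k (LinearMap.range T)).equivFun
  let P := e.toLinearMap ∘ₗ T.rangeRestrict
  let J := (LinearMap.range T).subtype ∘ₗ e.symm.toLinearMap
  have hP : LinearMap.range P = ⊤ := by
    rw [LinearMap.range_eq_top]
    exact e.surjective.comp T.surjective_rangeRestrict
  have hJ : LinearMap.ker J = ⊥ := by
    rw [LinearMap.ker_eq_bot]
    exact (Submodule.injective_subtype _).comp e.symm.injective
  obtain ⟨S, hS⟩ := P.exists_rightInverse_of_surjective hP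
  obtain ⟨R, hR⟩ := J.exists_leftInverse_of_injective hJ
  refine ⟨_, LinearMap.toMatrix' P, LinearMap.toMatrix' J, LinearMap.toMatrix' S,
    LinearMap.toMatrix' R, ?_, ?_, ?_⟩
  · rw [← LinearMap.toMatrix'_comp]
    have : J ∘ₗ P = T := by
      ext x; simp [J, P]
    rw [this]; simp [T]
  · rw [← LinearMap.toMatrix'_comp, hS, LinearMap.toMatrix'_id]
  · rw [← LinearMap.toMatrix'_comp, hR, LinearMap.toMatrix'_id]

theorem mem_hom {M N : QRep k Q} {f : ∀ i, Matrix (Fin (N.d i)) (Fin (M.d i)) k} :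
    f ∈ homSpace M N ↔ ∀ x, f (Q.tgt x) * M.mat x = N.mat x * f (Q.src x) := Iff.rfl

theorem hom_comp {L M N : QRep k Q} {f : ∀ i, Matrix (Fin (M.d i)) (Fin (L.d i)) k}
    {g : ∀ i, Matrix (Fin (N.d i)) (Fin (M.d i)) k} (hf : f ∈ homSpace L M)
    (hg : g ∈ homSpace M N) : (fun i => g i * f i) ∈ homSpace L N := by
  intro x
  simp only
  rw [Matrix.mul_assoc, hf x, ← Matrix.mul_assoc, hg x, Matrix.mul_assoc]

theorem hom_one (M : QRep k Q) :
    (1 : ∀ i, Matrix (Fin (M.d i)) (Fin (M.d i)) k) ∈ homSpace M M := by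
  intro x; simp

/-- image factorization. -/
theorem image_fact {M N : QRep k Q} {f : ∀ i, Matrix (Fin (N.d i)) (Fin (M.d i)) k}
    (hf : f ∈ homSpace M N) :
    ∃ I : QRep k Q, ∃ p ∈ homSpace M I, ∃ j ∈ homSpace I N,
      ∃ (s : ∀ i, Matrix (Fin (M.d i)) (Fin (I.d i)) k)
        (r : ∀ i, Matrix (Fin (I.d i)) (Fin (N.d i)) k),
      ∀ i, f i = j i * p i ∧ p i * s i = 1 ∧ r i * j i = 1 := by
  choose c p j s r h1 h2 h3 using fun i => rank_fact (f i)
  refine ⟨⟨c, fun x => r (Q.tgt x) * N.mat x * j (Q.src x)⟩, p, ?_, j, ?_, s, r,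
    fun i => ⟨h1 i, h2 i, h3 i⟩⟩
  · intro x
    have := hf x
    rw [h1, h1] at this
    calc p (Q.tgt x) * M.mat x = (r (Q.tgt x) * j (Q.tgt x)) * p (Q.tgt x) * M.mat x := by
          rw [h3, Matrix.one_mul]
      _ = r (Q.tgt x) * (j (Q.tgt x) * p (Q.tgt x) * M.mat x) := by
          simp only [Matrix.mul_assoc]
      _ = _ := by rw [this]; simp only [Matrix.mul_assoc]
  · intro x
    have := hf x
    rw [h1, h1] at this
    have key : N.mat x * j (Q.src x) = j (Q.tgt x) * (p (Q.tgt x) * M.mat x * s (Q.src x)) := by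
      calc N.mat x * j (Q.src x) = N.mat x * (j (Q.src x) * p (Q.src x)) * s (Q.src x) := by
            simp only [Matrix.mul_assoc, h2, Matrix.mul_one]
        _ = _ := by rw [← this]; simp only [Matrix.mul_assoc]
    show j (Q.tgt x) * (r (Q.tgt x) * N.mat x * j (Q.src x)) = _
    rw [Matrix.mul_assoc (r _), key, ← Matrix.mul_assoc (r _), h3, Matrix.one_mul]

/-- cokernels of monomorphisms. -/
theorem coker {I X : QRep k Q} {j : ∀ i, Matrix (Fin (X.d i)) (Fin (I.d i)) k}
    (hj : j ∈ homSpace I X) {r : ∀ i, Matrix (Fin (I.d i)) (Fin (X.d i)) k}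
    (hr : ∀ i, r i * j i = 1) :
    ∃ Y : QRep k Q, ∃ p ∈ homSpace X Y,
      ∃ s : ∀ i, Matrix (Fin (X.d i)) (Fin (Y.d i)) k,
      ∀ i, p i * s i = 1 ∧ p i * j i = 0 ∧ 1 - j i * r i = s i * p i := by
  choose c p s a b h1 h2 h3 using fun i => rank_fact (1 - j i * r i)
  have hpj : ∀ i, p i * j i = 0 := by
    intro i
    have : s i * (p i * j i) = 0 := by
      rw [← Matrix.mul_assoc, ← h1, Matrix.sub_mul, Matrix.mul_assoc, hr]; simp
    calc p i * j i = (b i * s i) * (p i * j i) := by rw [h3, Matrix.one_mul]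
      _ = 0 := by rw [Matrix.mul_assoc, this, Matrix.mul_zero]
  have hps : ∀ i, p i * s i = 1 := by
    intro i
    have : p i * (s i * p i) = p i := by
      rw [← h1, Matrix.mul_sub, ← Matrix.mul_assoc, hpj]; simp
    calc p i * s i = (p i * (s i * p i)) * a i := by
          simp only [Matrix.mul_assoc, h2, Matrix.mul_one]
      _ = 1 := by rw [this, h2]
  refine ⟨⟨c, fun x => p (Q.tgt x) * X.mat x * s (Q.src x)⟩, p, ?_, s,
    fun i => ⟨hps i, hpj i, h1 i⟩⟩
  intro x
  show _ = p (Q.tgt x) * X.mat x * s (Q.src x) * p (Q.src x)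
  rw [Matrix.mul_assoc _ (s _), ← h1, Matrix.mul_sub, Matrix.mul_one, ← Matrix.mul_assoc,
    Matrix.mul_assoc (p _), ← hj x, ← Matrix.mul_assoc, hpj]
  simp

theorem extDim_eq_zero_iff (M N : QRep k Q) :
    extDim M N = 0 ↔ Function.Surjective (extMap M N) := by
  unfold extDim
  rw [Module.finrank_zero_iff, Submodule.Quotient.subsingleton_iff,
    LinearMap.range_eq_top]

theorem euler_eq (M N : QRep k Q) :
    (homDim M N : ℤ) - extDim M N = Q.euler M.dimVec N.dimVec := by
  have hk : LinearMap.ker (extMap M N) = homSpace M N := by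
    ext f
    rw [LinearMap.mem_ker, mem_hom]
    constructor
    · intro h x
      exact sub_eq_zero.1 (congrFun h x)
    · intro h; funext x
      exact sub_eq_zero.2 (h x)
  have h1 := LinearMap.finrank_range_add_finrank_ker (extMap M N)
  have h2 := Submodule.finrank_quotient_add_finrank (LinearMap.range (extMap M N))
  rw [hk] at h1
  rw [Module.finrank_pi_fintype] at h1 h2
  simp only [Module.finrank_matrix, Fintype.card_fin, Module.finrank_self, mul_one] at h1 h2
  unfold homDim extDim FinQuiver.euler dimVec
  have h1' := congrArg (Nat.cast (R := ℤ)) h1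
  have h2' := congrArg (Nat.cast (R := ℤ)) h2
  push_cast at h1' h2'
  have e1 : ∑ i, (M.d i : ℤ) * N.d i = ∑ i, (N.d i : ℤ) * M.d i :=
    Finset.sum_congr rfl fun i _ => mul_comm _ _
  have e2 : ∑ x, (M.d (Q.src x) : ℤ) * N.d (Q.tgt x) =
      ∑ x, (N.d (Q.tgt x) : ℤ) * M.d (Q.src x) :=
    Finset.sum_congr rfl fun i _ => mul_comm _ _
  rw [e1, e2]
  linarith

/-- Ext¹(V,-) preserves epimorphisms. -/
theorem ext_epi {V X Y : QRep k Q} {p : ∀ i, Matrix (Fin (Y.d i)) (Fin (X.d i)) k}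
    (hp : p ∈ homSpace X Y) {s : ∀ i, Matrix (Fin (X.d i)) (Fin (Y.d i)) k}
    (hs : ∀ i, p i * s i = 1) (h : extDim V X = 0) : extDim V Y = 0 := by
  rw [extDim_eq_zero_iff] at h ⊢
  intro b
  obtain ⟨f, hf⟩ := h (fun x => s (Q.tgt x) * b x)
  refine ⟨fun i => p i * f i, ?_⟩
  funext x
  have hx : f (Q.tgt x) * V.mat x - X.mat x * f (Q.src x) = s (Q.tgt x) * b x := congrFun hf x
  show p (Q.tgt x) * f (Q.tgt x) * V.mat x - Y.mat x * (p (Q.src x) * f (Q.src x)) = b x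
  rw [← Matrix.mul_assoc (Y.mat x), ← hp x, Matrix.mul_assoc, Matrix.mul_assoc,
    ← Matrix.mul_sub, hx, ← Matrix.mul_assoc, hs, Matrix.one_mul]

/-- lifting along an epimorphism with kernel `I`. -/
theorem ext_lift {K I X Y : QRep k Q} {ι : ∀ i, Matrix (Fin (X.d i)) (Fin (I.d i)) k}
    (hι : ι ∈ homSpace I X) {r : ∀ i, Matrix (Fin (I.d i)) (Fin (X.d i)) k}
    {π : ∀ i, Matrix (Fin (Y.d i)) (Fin (X.d i)) k} (hπ : π ∈ homSpace X Y)
    {s : ∀ i, Matrix (Fin (X.d i)) (Fin (Y.d i)) k}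
    (h : ∀ i, π i * s i = 1 ∧ π i * ι i = 0 ∧ 1 - ι i * r i = s i * π i)
    {j : ∀ i, Matrix (Fin (Y.d i)) (Fin (K.d i)) k} (hj : j ∈ homSpace K Y)
    (hE : extDim K I = 0) :
    ∃ l ∈ homSpace K X, ∀ i, π i * l i = j i := by
  rw [extDim_eq_zero_iff] at hE
  let w : ∀ x : Fin Q.a, Matrix (Fin (X.d (Q.tgt x))) (Fin (K.d (Q.src x))) k := fun x =>
    s (Q.tgt x) * j (Q.tgt x) * K.mat x - X.mat x * (s (Q.src x) * j (Q.src x))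
  have hw : ∀ x, π (Q.tgt x) * w x = 0 := by
    intro x
    simp only [w]
    rw [Matrix.mul_sub, ← Matrix.mul_assoc, ← Matrix.mul_assoc, (h _).1, Matrix.one_mul,
      ← Matrix.mul_assoc, hπ x, Matrix.mul_assoc, ← Matrix.mul_assoc (π _), (h _).1,
      Matrix.one_mul, hj x, sub_self]
  have hw2 : ∀ x, ι (Q.tgt x) * (r (Q.tgt x) * w x) = w x := by
    intro x
    have : (1 - ι (Q.tgt x) * r (Q.tgt x)) * w x = 0 := by
      rw [(h _).2.2, Matrix.mul_assoc, hw, Matrix.mul_zero]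
    rw [Matrix.sub_mul, Matrix.one_mul, sub_eq_zero] at this
    rw [← Matrix.mul_assoc, ← this]
  obtain ⟨f, hf⟩ := hE (fun x => r (Q.tgt x) * w x)
  refine ⟨fun i => s i * j i - ι i * f i, ?_, ?_⟩
  · intro x
    have hx : f (Q.tgt x) * K.mat x - I.mat x * f (Q.src x) = r (Q.tgt x) * w x := congrFun hf x
    have hx2 := hw2 x
    rw [← hx, Matrix.mul_sub, ← Matrix.mul_assoc, ← Matrix.mul_assoc, hι x] at hx2
    simp only [Matrix.sub_mul, Matrix.mul_sub]
    rw [← Matrix.mul_assoc (X.mat x) (ι _), sub_eq_sub_iff_sub_eq_sub]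
    exact hx2.symm
  · intro i
    rw [Matrix.mul_sub, ← Matrix.mul_assoc, ← Matrix.mul_assoc, (h i).1, (h i).2.1]
    simp

/-- total dimension -/
def tot (M : QRep k Q) : ℕ := ∑ i, M.d i

theorem le_of_leftInv {n m : ℕ} {r : Matrix (Fin m) (Fin n) k} {j : Matrix (Fin n) (Fin m) k}
    (h : r * j = 1) : m ≤ n := by
  have h1 := Matrix.rank_mul_le_left r j
  rw [h, Matrix.rank_one, Fintype.card_fin] at h1
  exact h1.trans (by simpa using Matrix.rank_le_width r)

theorem comm_of_tot {I N : QRep k Q} {r : ∀ i, Matrix (Fin (I.d i)) (Fin (N.d i)) k}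
    {j : ∀ i, Matrix (Fin (N.d i)) (Fin (I.d i)) k} (h : ∀ i, r i * j i = 1)
    (ht : N.tot ≤ I.tot) : ∀ i, j i * r i = 1 := by
  have hle : ∀ i ∈ Finset.univ, I.d i ≤ N.d i := fun i _ => le_of_leftInv (h i)
  have heq := (Finset.sum_eq_sum_iff_of_le hle).1 (le_antisymm (Finset.sum_le_sum hle) ht)
  intro i
  exact (Matrix.mul_eq_one_comm_of_card_eq _ _ _ (by simpa using (heq i (Finset.mem_univ i)))).1 (h i)

theorem tot_le {I N : QRep k Q} {r : ∀ i, Matrix (Fin (I.d i)) (Fin (N.d i)) k}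
    {j : ∀ i, Matrix (Fin (N.d i)) (Fin (I.d i)) k} (h : ∀ i, r i * j i = 1) :
    I.tot ≤ N.tot := Finset.sum_le_sum fun i _ => le_of_leftInv (h i)

/-- endomorphism algebra -/
def endAlg (M : QRep k Q) : Subalgebra k (∀ i, Matrix (Fin (M.d i)) (Fin (M.d i)) k) where
  carrier := {f | f ∈ homSpace M M}
  mul_mem' := fun ha hb => hom_comp hb ha
  add_mem' := fun ha hb => (homSpace M M).add_mem ha hb
  algebraMap_mem' := fun c => by
    show _ ∈ homSpace M M
    rw [Algebra.algebraMap_eq_smul_one]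
    exact Submodule.smul_mem _ _ (hom_one M)

/-- Fitting: in a finite-dimensional algebra without idempotents every element is
nilpotent or a unit. -/
theorem fitting {A : Type*} [Ring A] [Algebra k A] [FiniteDimensional k A]
    (hA : ∀ e : A, e * e = e → e = 0 ∨ e = 1) (a : A) : IsNilpotent a ∨ IsUnit a := by
  have hint : IsIntegral k a := Algebra.IsIntegral.isIntegral a
  obtain ⟨q, hq, hnd⟩ := Polynomial.exists_eq_pow_rootMultiplicity_mul_and_not_dvd
    (minpoly k a) (minpoly.ne_zero hint) 0
  set m := Polynomial.rootMultiplicity 0 (minpoly k a)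
  rw [Polynomial.C_0, sub_zero] at hq hnd
  have hcop : IsCoprime (Polynomial.X ^ (m + 1) : Polynomial k) q :=
    IsCoprime.pow_left ((Polynomial.irreducible_X.coprime_iff_not_dvd).2 hnd)
  obtain ⟨u, v, huv⟩ := hcop
  have h0 : Polynomial.aeval a (Polynomial.X ^ (m + 1) * q) = 0 := by
    have : Polynomial.X ^ (m + 1) * q = Polynomial.X * minpoly k a := by
      rw [hq]; ring
    rw [this, map_mul, minpoly.aeval, mul_zero]
  have hid : Polynomial.aeval a (u * Polynomial.X ^ (m + 1)) *
      Polynomial.aeval a (u * Polynomial.X ^ (m + 1))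
      = Polynomial.aeval a (u * Polynomial.X ^ (m + 1)) := by
    have : (u * Polynomial.X ^ (m + 1)) * (u * Polynomial.X ^ (m + 1))
        = u * Polynomial.X ^ (m + 1) - (u * v) * (Polynomial.X ^ (m + 1) * q) := by
      linear_combination (u * Polynomial.X ^ (m + 1)) * huv
    rw [← map_mul, this, map_sub, map_mul _ (u * v), h0, mul_zero, sub_zero]
  rcases hA _ hid with h | h
  · left
    refine ⟨m + 1, ?_⟩
    have : (Polynomial.X ^ (m + 1) : Polynomial k) = (u * Polynomial.X ^ (m + 1)) *
        Polynomial.X ^ (m + 1) + v * (Polynomial.X ^ (m + 1) * q) := by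
      linear_combination (-Polynomial.X ^ (m + 1)) * huv
    have h2 := congrArg (Polynomial.aeval a) this
    rw [map_add, map_mul _ (u * Polynomial.X ^ (m + 1)), h, map_mul _ v, h0] at h2
    simpa using h2
  · right
    have e1 : u * Polynomial.X ^ (m + 1) = (u * Polynomial.X ^ m) * Polynomial.X := by ring
    have e2 : u * Polynomial.X ^ (m + 1) = Polynomial.X * (u * Polynomial.X ^ m) := by ring
    have h1 := h
    rw [e1, map_mul, Polynomial.aeval_X] at h
    rw [e2, map_mul, Polynomial.aeval_X] at h1
    exact ⟨⟨a, _, h1, h⟩, rfl⟩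

theorem tot_zero_of {I : QRep k Q} (h : ∀ i, (1 : Matrix (Fin (I.d i)) (Fin (I.d i)) k) = 0) :
    I.tot = 0 := by
  refine Finset.sum_eq_zero fun i _ => ?_
  by_contra hne
  have := congrFun (congrFun (h i) ⟨0, Nat.pos_of_ne_zero hne⟩) ⟨0, Nat.pos_of_ne_zero hne⟩
  simp at this

theorem d_zero_of_tot {I : QRep k Q} (h : I.tot = 0) (i : Fin Q.n) : I.d i = 0 :=
  (Finset.sum_eq_zero_iff.1 h) i (Finset.mem_univ i)

theorem left_zero_of_tot {I : QRep k Q} (h : I.tot = 0) (i : Fin Q.n) {n : ℕ}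
    (f : Matrix (Fin n) (Fin (I.d i)) k) : f = 0 := by
  ext a b
  have h1 := b.2
  have h2 := d_zero_of_tot h i
  omega

theorem indec_nil_or_unit {X : QRep k Q} (hX : Indec X)
    {θ : ∀ i, Matrix (Fin (X.d i)) (Fin (X.d i)) k} (hθ : θ ∈ homSpace X X) :
    IsNilpotent θ ∨ IsUnit θ := by
  have := fitting (k := k) (A := endAlg X) (fun e he => by
    rcases hX.2 e.1 e.2 (fun i => congrFun (congrArg Subtype.val he) i) with h | h
    · left; exact Subtype.ext h
    · right; exact Subtype.ext h) ⟨θ, hθ⟩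
  rcases this with h | h
  · left; exact h.map (endAlg X).val
  · right; exact h.map (endAlg X).val

theorem nonbrick_step {X : QRep k Q} (hX : Indec X)
    {θ : ∀ i, Matrix (Fin (X.d i)) (Fin (X.d i)) k} (hθ : θ ∈ homSpace X X)
    (hθ0 : θ ≠ 0) (hθu : ¬ IsUnit θ) :
    ∃ K : QRep k Q, Indec K ∧ K.tot < X.tot ∧ extDim K K ≠ 0 ∧
      ∃ p ∈ homSpace X K, ∃ s : ∀ i, Matrix (Fin (X.d i)) (Fin (K.d i)) k,
        ∀ i, p i * s i = 1 := by
  -- minimal proper nonzero image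
  let Good : QRep k Q → Prop := fun I => I.tot < X.tot ∧ 0 < I.tot ∧
    ∃ ρ ∈ homSpace X I, ∃ ι ∈ homSpace I X,
      ∃ (s : ∀ i, Matrix (Fin (X.d i)) (Fin (I.d i)) k)
        (r : ∀ i, Matrix (Fin (I.d i)) (Fin (X.d i)) k),
      ∀ i, ρ i * s i = 1 ∧ r i * ι i = 1
  have hex : ∃ n, ∃ I, Good I ∧ I.tot = n := by
    obtain ⟨I, ρ, hρ, ι, hι, s, r, h⟩ := image_fact hθ
    refine ⟨_, I, ⟨?_, ?_, ρ, hρ, ι, hι, s, r, fun i => (h i).2⟩, rfl⟩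
    · by_contra hlt
      push Not at hlt
      have a1 := comm_of_tot (fun i => (h i).2.1) hlt
      have a2 := comm_of_tot (fun i => (h i).2.2) hlt
      apply hθu
      refine ⟨⟨θ, fun i => s i * r i, ?_, ?_⟩, rfl⟩
      · funext i
        show θ i * (s i * r i) = 1
        rw [(h i).1, Matrix.mul_assoc, ← Matrix.mul_assoc (ρ i), (h i).2.1, Matrix.one_mul, a2]
      · funext i
        show (s i * r i) * θ i = 1
        rw [(h i).1, Matrix.mul_assoc, ← Matrix.mul_assoc (r i), (h i).2.2, Matrix.one_mul, a1]
    · rw [Nat.pos_iff_ne_zero]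
      intro h0
      apply hθ0
      funext i
      rw [(h i).1, left_zero_of_tot h0 i (ι i), Matrix.zero_mul]; rfl
  classical
  obtain ⟨I, hI, hIn⟩ := Nat.find_spec hex
  have hmin : ∀ I', Good I' → I.tot ≤ I'.tot := fun I' h' => by
    rw [hIn]; exact Nat.find_min' hex ⟨I', h', rfl⟩
  obtain ⟨hlt, hpos, ρ, hρ, ι, hι, sρ, rι, hs⟩ := hI
  have hsρ := fun i => (hs i).1
  have hrι := fun i => (hs i).2
  have hφ : ∀ i, ρ i * ι i = 0 := by
    by_contra hne
    push Not at hne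
    obtain ⟨i0, hi0⟩ := hne
    obtain ⟨I', ρ', hρ', ι', hι', s', r', h'⟩ := image_fact (hom_comp hι hρ)
    have hI' : I.tot ≤ I'.tot := by
      apply hmin
      refine ⟨(tot_le fun i => (h' i).2.2).trans_lt hlt, ?_, _, hom_comp hρ hρ', _,
        hom_comp hι' hι, fun i => sρ i * s' i, fun i => r' i * rι i, fun i => ⟨?_, ?_⟩⟩
      · rw [Nat.pos_iff_ne_zero]
        intro h0
        apply hi0
        rw [(h' i0).1, left_zero_of_tot h0 i0 (ι' i0), Matrix.zero_mul]
      · rw [Matrix.mul_assoc, ← Matrix.mul_assoc (ρ i), hsρ, Matrix.one_mul, (h' i).2.1]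
      · rw [Matrix.mul_assoc, ← Matrix.mul_assoc (rι i), hrι, Matrix.one_mul, (h' i).2.2]
    have a2 := comm_of_tot (fun i => (h' i).2.2) hI'
    have hψ : ∀ i, ρ i * ι i * (s' i * r' i) = 1 := fun i => by
      rw [(h' i).1, Matrix.mul_assoc, ← Matrix.mul_assoc (ρ' i), (h' i).2.1, Matrix.one_mul, a2]
    rcases indec_nil_or_unit hX (hom_comp hρ hι) with hn | hu
    · obtain ⟨n, hn⟩ := hn
      have key : ∀ (n : ℕ) i, ∃ w : Matrix (Fin (I.d i)) (Fin (I.d i)) k,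
          (ι i * ρ i) ^ n * ι i * w = ι i := by
        intro n i
        induction n with
        | zero => exact ⟨1, by simp⟩
        | succ n ih =>
          obtain ⟨w, hw⟩ := ih
          refine ⟨s' i * r' i * w, ?_⟩
          calc (ι i * ρ i) ^ (n + 1) * ι i * (s' i * r' i * w)
              = (ι i * ρ i) ^ n * (ι i * (ρ i * ι i * (s' i * r' i))) * w := by
                rw [pow_succ]; simp only [Matrix.mul_assoc]
            _ = ι i := by rw [hψ, Matrix.mul_one, hw]
      have : I.tot = 0 := tot_zero_of fun i => by
        obtain ⟨w, hw⟩ := key n i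
        have hni : (ι i * ρ i) ^ n = 0 := congrFun hn i
        rw [hni] at hw
        rw [← hrι i, ← hw]; simp
      omega
    · obtain ⟨u, hu⟩ := hu
      have hinv : ∀ i, ((↑u⁻¹ : ∀ i, Matrix (Fin (X.d i)) (Fin (X.d i)) k) i * ι i) * ρ i = 1 := by
        intro i
        have := congrFun (u.inv_mul) i
        rw [Pi.mul_apply, hu] at this
        rw [Matrix.mul_assoc]; exact this
      have := tot_le hinv
      omega
  -- the cokernel
  obtain ⟨Y, π, hπ, sπ, hY⟩ := coker hι hrι
  -- induced map Y → I
  have hρbar : ∀ i, ρ i * sπ i * π i = ρ i := fun i => by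
    rw [Matrix.mul_assoc, ← (hY i).2.2, Matrix.mul_sub, ← Matrix.mul_assoc, hφ]; simp
  have hσ : (fun i => ρ i * sπ i) ∈ homSpace Y I := by
    intro x
    have e : ρ (Q.tgt x) * sπ (Q.tgt x) * Y.mat x * π (Q.src x)
        = I.mat x * (ρ (Q.src x) * sπ (Q.src x)) * π (Q.src x) := by
      rw [Matrix.mul_assoc _ (Y.mat x), ← hπ x, ← Matrix.mul_assoc, hρbar, hρ x,
        Matrix.mul_assoc (I.mat x), hρbar]
    have e2 := congrArg (· * sπ (Q.src x)) e
    simpa only [Matrix.mul_assoc _ (π _), (hY _).1, Matrix.mul_one] using e2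
  set σ : ∀ i, Matrix (Fin (I.d i)) (Fin (Y.d i)) k := fun i => ρ i * sπ i with hσdef
  have hσπ : ∀ i, σ i * π i = ρ i := hρbar
  -- minimal summand of Y not killed by σ
  let Good2 : QRep k Q → Prop := fun K =>
    ∃ p ∈ homSpace Y K, ∃ j ∈ homSpace K Y, (∀ i, p i * j i = 1) ∧ ∃ i, σ i * j i ≠ 0
  have hex2 : ∃ n, ∃ K, Good2 K ∧ K.tot = n := by
    refine ⟨_, Y, ⟨1, hom_one Y, 1, hom_one Y, fun i => by simp, ?_⟩, rfl⟩
    by_contra hne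
    push Not at hne
    have : I.tot = 0 := tot_zero_of fun i => by
      have h1 := hne i
      rw [Pi.one_apply, Matrix.mul_one] at h1
      rw [← hsρ i, ← hσπ i, h1]; simp
    omega
  obtain ⟨K, hK, hKn⟩ := Nat.find_spec hex2
  have hmin2 : ∀ K', Good2 K' → K.tot ≤ K'.tot := fun K' h' => by
    rw [hKn]; exact Nat.find_min' hex2 ⟨K', h', rfl⟩
  obtain ⟨p, hp, j, hj, hpj, i0, hi0⟩ := hK
  have split : ∀ g ∈ homSpace K K, (∀ i, g i * g i = g i) → (∃ i, σ i * j i * g i ≠ 0) →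
      g = 1 := by
    intro g hg hgg hne
    obtain ⟨K', p', hp', j', hj', s', r', h'⟩ := image_fact hg
    have hpj' : ∀ i, p' i * j' i = 1 := fun i => by
      have e := hgg i
      rw [(h' i).1] at e
      calc p' i * j' i = (r' i * j' i) * (p' i * j' i) * (p' i * s' i) := by
            rw [(h' i).2.1, (h' i).2.2]; simp
        _ = r' i * (j' i * p' i * (j' i * p' i)) * s' i := by simp only [Matrix.mul_assoc]
        _ = (r' i * j' i) * (p' i * s' i) := by rw [e]; simp only [Matrix.mul_assoc]
        _ = 1 := by rw [(h' i).2.1, (h' i).2.2]; simp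
    have hle : K.tot ≤ K'.tot := by
      apply hmin2
      refine ⟨_, hom_comp hp hp', _, hom_comp hj' hj, fun i => ?_, ?_⟩
      · rw [Matrix.mul_assoc, ← Matrix.mul_assoc (p i), hpj, Matrix.one_mul, hpj']
      · obtain ⟨i, hi⟩ := hne
        refine ⟨i, fun h0 => hi ?_⟩
        rw [(h' i).1, ← Matrix.mul_assoc, Matrix.mul_assoc (σ i), h0, Matrix.zero_mul]
    have := comm_of_tot hpj' hle
    funext i
    rw [(h' i).1, this]; rfl
  have hKindec : Indec K := by
    constructor
    · by_contra hne
      push Not at hne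
      exact hi0 (left_zero_of_tot (Finset.sum_eq_zero fun i _ => hne i) _ _)
    · intro g hg hgg
      by_cases hne : ∃ i, σ i * j i * g i ≠ 0
      · right; exact split g hg hgg hne
      · left
        push Not at hne
        have := split (1 - g) (Submodule.sub_mem _ (hom_one K) hg) (fun i => by
          simp only [Pi.sub_apply, Pi.one_apply, Matrix.mul_sub, Matrix.sub_mul, hgg i]
          simp) ⟨i0, by
          simp only [Pi.sub_apply, Pi.one_apply, Matrix.mul_sub, hne i0]
          simpa using hi0⟩
        simpa using this
  -- K → I is epi
  obtain ⟨I', ρ', hρ', ι', hι', s', r', h'⟩ := image_fact (hom_comp hj hσ)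
  have hpπ : ∀ i, p i * π i * (sπ i * j i) = 1 := fun i => by
    rw [Matrix.mul_assoc, ← Matrix.mul_assoc (π i), (hY i).1, Matrix.one_mul, hpj]
  have hI' : I.tot ≤ I'.tot := by
    apply hmin
    refine ⟨(tot_le fun i => (h' i).2.2).trans_lt hlt, ?_, _, hom_comp (hom_comp hπ hp) hρ', _,
      hom_comp hι' hι, fun i => sπ i * j i * s' i, fun i => r' i * rι i, fun i => ⟨?_, ?_⟩⟩
    · rw [Nat.pos_iff_ne_zero]
      intro h0
      apply hi0
      rw [(h' i0).1, left_zero_of_tot h0 i0 (ι' i0), Matrix.zero_mul]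
    · rw [Matrix.mul_assoc, ← Matrix.mul_assoc (p i * π i), hpπ, Matrix.one_mul, (h' i).2.1]
    · rw [Matrix.mul_assoc, ← Matrix.mul_assoc (rι i), hrι, Matrix.one_mul, (h' i).2.2]
  have a2 := comm_of_tot (fun i => (h' i).2.2) hI'
  have hepi : ∀ i, σ i * j i * (s' i * r' i) = 1 := fun i => by
    rw [(h' i).1, Matrix.mul_assoc, ← Matrix.mul_assoc (ρ' i), (h' i).2.1, Matrix.one_mul, a2]
  have hI0 : ¬ ∀ i, ι i = 0 := fun h0 => by
    have : I.tot = 0 := tot_zero_of fun i => by rw [← hrι i, h0 i]; simp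
    omega
  refine ⟨K, hKindec, ?_, ?_, _, hom_comp hπ hp, fun i => sπ i * j i, hpπ⟩
  · by_contra hge
    push Not at hge
    have := comm_of_tot hpπ hge
    apply hI0
    intro i
    rw [← Matrix.one_mul (ι i), ← this i]
    simp only [Matrix.mul_assoc, (hY i).2.1, Matrix.mul_zero]
  · intro hE
    have hE2 : extDim K I = 0 := ext_epi (hom_comp hj hσ) hepi hE
    obtain ⟨l, hl, hπl⟩ := ext_lift hι hπ hY hj hE2
    have hpl : ∀ i, p i * π i * l i = 1 := fun i => by rw [Matrix.mul_assoc, hπl, hpj]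
    rcases hX.2 _ (hom_comp (hom_comp hπ hp) hl) (fun i => by
      rw [Matrix.mul_assoc, ← Matrix.mul_assoc (p i * π i), hpl, Matrix.one_mul]) with h0 | h1
    · apply hi0
      have e : l i0 * (p i0 * π i0) = 0 := congrFun h0 i0
      have : (1 : Matrix (Fin (K.d i0)) (Fin (K.d i0)) k) = 0 := by
        calc 1 = (p i0 * π i0 * l i0) * (p i0 * π i0 * l i0) := by rw [hpl]; simp
          _ = p i0 * π i0 * (l i0 * (p i0 * π i0)) * l i0 := by simp only [Matrix.mul_assoc]
          _ = 0 := by rw [e]; simp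
      rw [← Matrix.mul_one (σ i0 * j i0), this, Matrix.mul_zero]
    · apply hI0
      intro i
      have e : l i * (p i * π i) = 1 := congrFun h1 i
      rw [← Matrix.one_mul (ι i), ← e]
      simp only [Matrix.mul_assoc, (hY i).2.1, Matrix.mul_zero]

theorem brick_homDim [IsAlgClosed k] {X : QRep k Q} (hX : Indec X)
    (hb : ∀ θ ∈ homSpace X X, θ ≠ 0 → IsUnit θ) : homDim X X ≤ 1 := by
  have hnt : Nontrivial (∀ i, Matrix (Fin (X.d i)) (Fin (X.d i)) k) := by
    refine ⟨⟨1, 0, fun h => ?_⟩⟩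
    obtain ⟨i, hi⟩ := hX.1
    exact hi (d_zero_of_tot (tot_zero_of fun i => congrFun h i) i)
  have hle : homSpace X X ≤ Submodule.span k {1} := by
    intro f hf
    obtain ⟨c, hc⟩ := spectrum.nonempty_of_isAlgClosed_of_finiteDimensional k f
    rw [spectrum.mem_iff, Algebra.algebraMap_eq_smul_one] at hc
    rw [Submodule.mem_span_singleton]
    refine ⟨c, ?_⟩
    by_contra hne
    exact hc (hb _ (Submodule.sub_mem _ (Submodule.smul_mem _ _ (hom_one X)) hf)
      (sub_ne_zero.2 hne))
  exact (Submodule.finrank_mono hle).trans (finrank_span_singleton one_ne_zero).le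

theorem euler_add_smul (Q : FinQuiver) (t : ℤ) (d e : Fin Q.n → ℤ) :
    Q.euler (t • d + e) (t • d + e) =
      t * t * Q.euler d d + t * (Q.euler d e + Q.euler e d) + Q.euler e e := by
  have key : ∀ (m : ℕ) (a b a' b' : Fin m → ℤ), ∑ x, (t * a x + a' x) * (t * b x + b' x) =
      t * t * ∑ x, a x * b x + t * (∑ x, a x * b' x + ∑ x, a' x * b x) + ∑ x, a' x * b' x := by
    intro m a b a' b'
    simp only [Finset.mul_sum, ← Finset.sum_add_distrib]
    exact Finset.sum_congr rfl fun x _ => by ring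
  simp only [FinQuiver.euler, Pi.add_apply, Pi.smul_apply, smul_eq_mul]
  rw [key Q.n d d e e, key Q.a (fun x => d (Q.src x)) (fun x => d (Q.tgt x))
    (fun x => e (Q.src x)) (fun x => e (Q.tgt x))]
  ring

theorem euler_smul_right (Q : FinQuiver) (t : ℤ) (d e : Fin Q.n → ℤ) :
    Q.euler d (t • e) = t * Q.euler d e := by
  simp only [FinQuiver.euler, Pi.smul_apply, smul_eq_mul, mul_sub, Finset.mul_sum]
  congr 1 <;> exact Finset.sum_congr rfl fun i _ => by ring

theorem null_antisymm {Q : FinQuiver} (hQ : Q.IsEuclidean) {δ : Fin Q.n → ℤ}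
    (hδ : Q.IsNullRoot δ) (v : Fin Q.n → ℤ) : Q.euler δ v + Q.euler v δ = 0 := by
  set c := Q.euler δ v + Q.euler v δ with hc
  have h := fun t : ℤ => hQ.2.2.1 (t • δ + v)
  simp only [euler_add_smul, hδ.2.1, ← hc] at h
  by_contra hne
  have hsq : 0 < c * c := mul_self_pos.2 hne
  have := h (-(Q.euler v v + 1) * c)
  have hv := hQ.2.2.1 v
  nlinarith

theorem main_aux [IsAlgClosed k] (hQ : Q.IsEuclidean) (δ : Fin Q.n → ℤ) (hδ : Q.IsNullRoot δ)
    (V : QRep k Q) (hVpi : 0 < Q.euler δ V.dimVec) :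
    ∀ (n : ℕ) (X : QRep k Q), X.tot = n → Indec X → extDim X X ≠ 0 → extDim V X ≠ 0 := by
  intro n
  induction n using Nat.strong_induction_on with
  | _ n ih =>
    intro X hn hX hE
    by_cases hb : ∀ θ ∈ homSpace X X, θ ≠ 0 → IsUnit θ
    · have h1 := brick_homDim hX hb
      have h2 := euler_eq X X
      have h3 := hQ.2.2.1 X.dimVec
      have h4 : Q.euler X.dimVec X.dimVec = 0 := by omega
      obtain ⟨m, hm⟩ := hδ.2.2 _ h4
      have hmpos : 0 < m := by
        obtain ⟨i, hi⟩ := hX.1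
        have h5 : (X.d i : ℤ) = m * δ i := congrFun hm i
        have h6 := hδ.1 i
        have h7 : 0 < m * δ i := by rw [← h5]; exact_mod_cast Nat.pos_of_ne_zero hi
        exact pos_of_mul_pos_left h7 h6.le
      have h5 := euler_eq V X
      rw [hm, euler_smul_right] at h5
      have h6 := null_antisymm hQ hδ V.dimVec
      have h7 : m * Q.euler V.dimVec δ < 0 := mul_neg_of_pos_of_neg hmpos (by omega)
      omega
    · push Not at hb
      obtain ⟨θ, hθ, h0, hu⟩ := hb
      obtain ⟨K, hK, hlt, hKE, p, hp, s, hs⟩ := nonbrick_step hX hθ h0 hu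
      intro hV
      exact ih K.tot (by omega) K rfl hK hKE (ext_epi hp hs hV)

end QRep

open QRep in
/-- over a Euclidean quiver, if `V` is a preinjective indecomposable
(⟨δ, dim V⟩ > 0) and `X` an indecomposable non-exceptional representation, then
Ext¹(V,X) ≠ 0. -/
theorem ext_ne_zero_of_preinjective (k : Type) [Field k] [IsAlgClosed k]
    (Q : FinQuiver) (hQ : Q.IsEuclidean) (δ : Fin Q.n → ℤ) (hδ : Q.IsNullRoot δ)
    (V X : QRep k Q) (hV : Indec V) (hVpi : 0 < Q.euler δ V.dimVec)
    (hX : Indec X) (hXne : extDim X X ≠ 0) :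
    extDim V X ≠ 0 := by
  exact QRep.main_aux hQ δ hδ V hVpi _ X rfl hX hXne
end

section
/- Let Q be a Euclidean quiver and V a rigid representation in rep(Q) that has an indecomposable summand which is not regular. Then V^⊥ contains no non-exceptional indecomposable representations; in particular V^⊥ is of finite representation type. -/
open Matrix BigOperators

/-! ### Auxiliary: representations on abstract vector spaces -/

structure VRep (k : Type) [Field k] (Q : FinQuiver) where
  U : Fin Q.n → Type
  [acg : ∀ i, AddCommGroup (U i)]
  [mod : ∀ i, Module k (U i)]
  [fin : ∀ i, FiniteDimensional k (U i)]
  map : ∀ x : Fin Q.a, U (Q.src x) →ₗ[k] U (Q.tgt x)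

attribute [instance] VRep.acg VRep.mod VRep.fin

namespace VRep

variable {k : Type} [Field k] {Q : FinQuiver}

abbrev C0 (A B : VRep k Q) := ∀ i, A.U i →ₗ[k] B.U i
abbrev C1 (A B : VRep k Q) := ∀ x : Fin Q.a, A.U (Q.src x) →ₗ[k] B.U (Q.tgt x)

def phi (A B : VRep k Q) : C0 A B →ₗ[k] C1 A B where
  toFun f := fun x => f (Q.tgt x) ∘ₗ A.map x - B.map x ∘ₗ f (Q.src x)
  map_add' := by
    intro f g; funext x
    ext v
    simp
    abel
  map_smul' := by
    intro c f; funext x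
    ext v
    simp [smul_sub]

theorem phi_apply (A B : VRep k Q) (f : C0 A B) (x : Fin Q.a) (v : A.U (Q.src x)) :
    phi A B f x v = f (Q.tgt x) (A.map x v) - B.map x (f (Q.src x) v) := rfl

def IsHom {A B : VRep k Q} (f : C0 A B) : Prop :=
  ∀ x v, f (Q.tgt x) (A.map x v) = B.map x (f (Q.src x) v)

theorem isHom_iff {A B : VRep k Q} (f : C0 A B) : IsHom f ↔ phi A B f = 0 := by
  constructor
  · intro h; funext x; ext v; simp [phi_apply, h x v]
  · intro h x v
    have := congrArg (fun c : C1 A B => c x v) h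
    simpa [phi_apply, sub_eq_zero] using this

def cmp {A B C : VRep k Q} (g : C0 B C) (f : C0 A B) : C0 A C := fun i => g i ∘ₗ f i

@[simp] theorem cmp_apply {A B C : VRep k Q} (g : C0 B C) (f : C0 A B) (i) (v) :
    cmp g f i v = g i (f i v) := rfl

def one (A : VRep k Q) : C0 A A := fun _ => LinearMap.id

@[simp] theorem one_apply (A : VRep k Q) (i) (v) : one A i v = v := rfl

theorem IsHom.cmp {A B C : VRep k Q} {g : C0 B C} {f : C0 A B} (hg : IsHom g) (hf : IsHom f) :
    IsHom (cmp g f) := by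
  intro x v
  simp [hf x, hg x]

theorem isHom_one (A : VRep k Q) : IsHom (one A) := fun _ _ => rfl

theorem IsHom.sub {A B : VRep k Q} {g f : C0 A B} (hg : IsHom g) (hf : IsHom f) :
    IsHom (g - f) := by
  rw [isHom_iff] at *
  rw [map_sub, hg, hf, sub_zero]

theorem IsHom.smul {A B : VRep k Q} {g : C0 A B} (hg : IsHom g) (c : k) :
    IsHom (c • g) := by
  rw [isHom_iff] at *
  rw [map_smul, hg, smul_zero]

noncomputable def tdim (A : VRep k Q) : ℕ := ∑ i, Module.finrank k (A.U i)

noncomputable def rk {A B : VRep k Q} (f : C0 A B) : ℕ :=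
  ∑ i, Module.finrank k (LinearMap.range (f i))

theorem c0_ext {A B : VRep k Q} {f g : C0 A B} (h : ∀ i v, f i v = g i v) : f = g := by
  funext i; ext v; exact h i v

theorem rk_cmp_le_left {A B C : VRep k Q} (g : C0 B C) (f : C0 A B) : rk (cmp g f) ≤ rk g :=
  Finset.sum_le_sum fun i _ =>
    Submodule.finrank_mono (LinearMap.range_comp_le_range (f i) (g i))

theorem rk_cmp_le_right {A B C : VRep k Q} (g : C0 B C) (f : C0 A B) : rk (cmp g f) ≤ rk f :=
  Finset.sum_le_sum fun i _ => by
    have : LinearMap.range (cmp g f i) = (LinearMap.range (f i)).map (g i) :=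
      LinearMap.range_comp _ _
    rw [this]
    exact Submodule.finrank_map_le _ _

theorem sum_eq_of_le {n : ℕ} {a b : Fin n → ℕ} (h : ∀ i, a i ≤ b i) (h' : ∑ i, b i ≤ ∑ i, a i) :
    ∀ i, a i = b i := by
  have := (Finset.sum_eq_sum_iff_of_le (s := Finset.univ) (fun i _ => h i)).1
    (le_antisymm (Finset.sum_le_sum fun i _ => h i) h')
  exact fun i => this i (Finset.mem_univ i)

theorem surj_of_rk {A B : VRep k Q} (f : C0 A B) (h : tdim B ≤ rk f) :
    ∀ i, Function.Surjective (f i) := by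
  intro i
  have := sum_eq_of_le (fun i => Submodule.finrank_le (LinearMap.range (f i))) h i
  exact LinearMap.range_eq_top.1 (Submodule.eq_top_of_finrank_eq this)

theorem rk_le_source {A B : VRep k Q} (f : C0 A B) : rk f ≤ tdim A :=
  Finset.sum_le_sum fun i _ => LinearMap.finrank_range_le (f i)

theorem rk_le_target {A B : VRep k Q} (f : C0 A B) : rk f ≤ tdim B :=
  Finset.sum_le_sum fun i _ => Submodule.finrank_le _

theorem inj_of_rk {A B : VRep k Q} (f : C0 A B) (h : tdim A ≤ rk f) :
    ∀ i, Function.Injective (f i) := by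
  intro i
  have := sum_eq_of_le (fun i => LinearMap.finrank_range_le (f i)) h i
  have h2 := LinearMap.finrank_range_add_finrank_ker (f i)
  have h3 : Module.finrank k (LinearMap.ker (f i)) = 0 := by omega
  exact LinearMap.ker_eq_bot.1 (Submodule.finrank_eq_zero.1 h3)

theorem rk_zero (A B : VRep k Q) : rk (0 : C0 A B) = 0 :=
  Finset.sum_eq_zero fun i _ => by
    have : LinearMap.range ((0 : C0 A B) i) = ⊥ := LinearMap.range_zero
    rw [this, finrank_bot]

theorem rk_of_inj {A B : VRep k Q} (f : C0 A B) (h : ∀ i, Function.Injective (f i)) :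
    rk f = tdim A :=
  Finset.sum_congr rfl fun i _ => LinearMap.finrank_range_of_inj (h i)

theorem rk_of_surj {A B : VRep k Q} (f : C0 A B) (h : ∀ i, Function.Surjective (f i)) :
    rk f = tdim B :=
  Finset.sum_congr rfl fun i _ => by rw [LinearMap.range_eq_top.2 (h i), finrank_top]

/-- Every stable family of subspaces is the image of an injective morphism. -/
theorem exists_sub (A : VRep k Q) (S : ∀ i, Submodule k (A.U i))
    (hS : ∀ x, ∀ v ∈ S (Q.src x), A.map x v ∈ S (Q.tgt x)) :
    ∃ (B : VRep k Q) (ι : C0 B A), IsHom ι ∧ (∀ i, Function.Injective (ι i)) ∧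
      ∀ i, LinearMap.range (ι i) = S i :=
  ⟨{ U := fun i => S i, map := fun x => (A.map x).restrict (hS x) },
    fun i => (S i).subtype, fun _ _ => rfl, fun i => (S i).injective_subtype,
    fun i => Submodule.range_subtype _⟩

/-- Factor a family of linear maps through an injective one. -/
theorem exists_factor {A B C : VRep k Q} (f : C0 A B) (ι : C0 C B)
    (hι : ∀ i, Function.Injective (ι i))
    (h : ∀ i, LinearMap.range (f i) ≤ LinearMap.range (ι i)) :
    ∃ f' : C0 A C, (∀ i v, ι i (f' i v) = f i v) := by
  refine ⟨fun i => (LinearEquiv.ofInjective (ι i) (hι i)).symm.toLinearMap ∘ₗ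
    ((f i).codRestrict _ (fun v => h i ⟨v, rfl⟩)), fun i v => ?_⟩
  have := LinearEquiv.apply_symm_apply (LinearEquiv.ofInjective (ι i) (hι i))
    ((f i).codRestrict _ (fun v => h i ⟨v, rfl⟩) v)
  have := congrArg Subtype.val this
  simpa using this

theorem isHom_of_factor {A B C : VRep k Q} {f : C0 A B} {ι : C0 C B}
    (hι : ∀ i, Function.Injective (ι i)) (hf : IsHom f) (hιh : IsHom ι) {f' : C0 A C}
    (h : ∀ i v, ι i (f' i v) = f i v) : IsHom f' := by
  intro x v
  apply hι
  rw [h, hf, hιh, h]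

def VIndec (A : VRep k Q) : Prop :=
  0 < tdim A ∧ ∀ e : C0 A A, IsHom e → (∀ i v, e i (e i v) = e i v) → e = 0 ∨ e = one A

theorem exists_min {α : Type*} (P : α → Prop) (r : α → ℕ) (h : ∃ a, P a) :
    ∃ a, P a ∧ ∀ b, P b → r a ≤ r b := by
  classical
  have h' : ∃ n, ∃ a, P a ∧ r a = n := by
    obtain ⟨a, ha⟩ := h
    exact ⟨_, a, ha, rfl⟩
  obtain ⟨a, ha, hr⟩ := Nat.find_spec h'
  exact ⟨a, ha, fun b hb => hr ▸ Nat.find_min' h' ⟨b, hb, rfl⟩⟩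

/-- Perpendicularity facts. -/
theorem perp_of_epi_mono {W X Y Z : VRep k Q} {p : C0 X Y} {ι : C0 Y Z} (hX : Function.Surjective (phi W X))
    (hZ : Function.Injective (phi W Z)) (hp : IsHom p) (hι : IsHom ι)
    (hps : ∀ i, Function.Surjective (p i)) (hιi : ∀ i, Function.Injective (ι i)) :
    Function.Bijective (phi W Y) := by
  constructor
  · rw [injective_iff_map_eq_zero]
    intro f hf
    rw [← isHom_iff] at hf
    have h := (isHom_iff _).1 (hι.cmp hf)
    have := hZ (h.trans (map_zero _).symm)
    refine c0_ext fun i v => hιi i ?_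
    have := congrArg (fun c : C0 W Z => c i v) this
    simpa using this
  · intro c
    have : ∀ x, ∃ c' : W.U (Q.src x) →ₗ[k] X.U (Q.tgt x), p _ ∘ₗ c' = c x := by
      intro x
      obtain ⟨s, hs⟩ := LinearMap.exists_rightInverse_of_surjective (p (Q.tgt x))
        (LinearMap.range_eq_top.2 (hps _))
      refine ⟨s ∘ₗ c x, ?_⟩
      rw [← LinearMap.comp_assoc, hs, LinearMap.id_comp]
    choose c' hc' using this
    obtain ⟨f, hf⟩ := hX c'
    refine ⟨cmp p f, ?_⟩
    funext x
    ext v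
    rw [← hc', ← hf]
    simp [phi_apply, hp x]

theorem perp_ker {W X K : VRep k Q} {θ : C0 X X} {ι : C0 K X} (hX : Function.Bijective (phi W X))
    (hθ : IsHom θ) (hι : IsHom ι)
    (hιi : ∀ i, Function.Injective (ι i)) (hr : ∀ i, LinearMap.range (ι i) = LinearMap.ker (θ i)) :
    Function.Bijective (phi W K) := by
  constructor
  · rw [injective_iff_map_eq_zero]
    intro f hf
    rw [← isHom_iff] at hf
    have h := (isHom_iff _).1 (hι.cmp hf)
    have := hX.1 (h.trans (map_zero _).symm)
    refine c0_ext fun i v => hιi i ?_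
    have := congrArg (fun c : C0 W X => c i v) this
    simpa using this
  · intro c
    obtain ⟨f, hf⟩ := hX.2 (fun x => ι _ ∘ₗ c x)
    have hθι : ∀ i v, θ i (ι i v) = 0 := fun i v => by
      have : ι i v ∈ LinearMap.ker (θ i) := hr i ▸ ⟨v, rfl⟩
      exact this
    have h0 : phi W X (cmp θ f) = 0 := by
      funext x; ext v
      have := congrArg (fun c : C1 W X => θ _ (c x v)) hf
      simp only [phi_apply, map_sub, LinearMap.comp_apply, hθι] at this
      simp only [phi_apply, cmp_apply, ← hθ x]
      simpa using this
    have h1 := hX.1 (h0.trans (map_zero _).symm)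
    obtain ⟨f', hf'⟩ := exists_factor f ι hιi (by
      rintro i _ ⟨v, rfl⟩
      rw [hr]
      have := congrArg (fun c : C0 W X => c i v) h1
      simpa using this)
    refine ⟨f', ?_⟩
    funext x; ext v
    apply hιi
    have := congrArg (fun c : C1 W X => c x v) hf
    simp only [phi_apply, LinearMap.comp_apply] at this
    rw [phi_apply, map_sub, hf', hι, hf', this]

theorem indec_of_split_min {K I : VRep k Q} {j : C0 I K} {Y : VRep k Q} {a : C0 Y K} {b : C0 K Y}
    (ha : IsHom a) (hb : IsHom b) (hba : ∀ i v, b i (a i v) = v)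
    (hj : cmp (cmp a b) j ≠ 0)
    (hmin : ∀ e : C0 K K, IsHom e → (∀ i v, e i (e i v) = e i v) → cmp e j ≠ 0 →
      rk (cmp a b) ≤ rk e) : VIndec Y := by
  have hai : ∀ i, Function.Injective (a i) := fun i => Function.LeftInverse.injective (hba i)
  have hbs : ∀ i, Function.Surjective (b i) := fun i v => ⟨a i v, hba i v⟩
  have hrk : rk (cmp a b) = tdim Y := by
    have : ∀ i, LinearMap.range (cmp a b i) = LinearMap.range (a i) := fun i =>
      LinearMap.range_comp_of_range_eq_top _ (LinearMap.range_eq_top.2 (hbs i))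
    rw [← rk_of_inj a hai]
    exact Finset.sum_congr rfl fun i _ => by rw [this]
  have key : ∀ g : C0 Y Y, IsHom g → (∀ i v, g i (g i v) = g i v) →
      cmp (cmp a (cmp g b)) j ≠ 0 → g = one Y := by
    intro g hg hgg hne
    have h1 := hmin (cmp a (cmp g b)) (ha.cmp (hg.cmp hb))
      (fun i v => by simp [hba, hgg]) hne
    have h2 : tdim Y ≤ rk g := by
      rw [← hrk]
      exact h1.trans ((rk_cmp_le_right _ _).trans (rk_cmp_le_left _ _))
    have h3 := surj_of_rk g h2
    refine c0_ext fun i v => ?_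
    obtain ⟨w, rfl⟩ := h3 i v
    simp [hgg]
  refine ⟨?_, fun g hg hgg => ?_⟩
  · rw [Nat.pos_iff_ne_zero]
    intro h0
    apply hj
    have : rk (cmp a b) = 0 := hrk.trans h0
    unfold rk at this
    rw [Finset.sum_eq_zero_iff] at this
    refine c0_ext fun i v => ?_
    have h1 := Submodule.finrank_eq_zero.1 (this i (Finset.mem_univ i))
    have h2 := LinearMap.range_eq_bot.1 h1
    have := congrArg (fun f => f (j i v)) h2
    simpa using this
  · by_cases h : cmp (cmp a (cmp g b)) j = 0
    · left
      have h2 := key (one Y - g) ((isHom_one Y).sub hg) (fun i v => by simp [hgg]) (by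
        intro h'
        apply hj
        refine c0_ext fun i v => ?_
        have e1 := congrArg (fun c : C0 I K => c i v) h
        have e2 := congrArg (fun c : C0 I K => c i v) h'
        simp at e1 e2 ⊢
        rw [e1, sub_zero] at e2
        exact e2)
      have : one Y - g = one Y - 0 := by rw [h2, sub_zero]
      exact sub_right_injective this
    · right
      exact key g hg hgg h

/-- minimal-rank endomorphism of an indecomposable squares to zero -/
theorem sq_zero_of_min {X : VRep k Q} (hX : VIndec X) {θ : C0 X X} (hθ : IsHom θ) (hθ0 : θ ≠ 0)
    (hni : rk θ < tdim X)
    (hmin : ∀ η : C0 X X, IsHom η → η ≠ 0 → rk θ ≤ rk η) : ∀ i v, θ i (θ i v) = 0 := by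
  by_contra hcon
  have hne : cmp θ θ ≠ 0 := by
    intro h; apply hcon; intro i v
    have := congrArg (fun c : C0 X X => c i v) h
    simpa using this
  have h1 := hmin _ (hθ.cmp hθ) hne
  obtain ⟨I, ι, hι, hιi, hr⟩ := exists_sub X (fun i => LinearMap.range (θ i))
    (by rintro x _ ⟨v, rfl⟩; exact ⟨X.map x v, hθ x v⟩)
  obtain ⟨p, hp⟩ := exists_factor θ ι hιi (fun i => (hr i).ge)
  have hph := isHom_of_factor hιi hθ hι hp
  have htI : tdim I = rk θ := by
    rw [← rk_of_inj ι hιi]; exact Finset.sum_congr rfl fun i _ => by rw [hr]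
  -- p ∘ ι : I → I bijective
  have e : cmp θ θ = cmp ι (cmp (cmp p ι) p) := by
    refine c0_ext fun i v => ?_
    simp [hp]
  have hs : tdim I ≤ rk (cmp p ι) := by
    rw [htI]
    refine h1.trans ?_
    rw [e]
    exact (rk_cmp_le_right _ _).trans (rk_cmp_le_left _ _)
  have hsurj := surj_of_rk _ hs
  have hinj := inj_of_rk _ hs
  obtain ⟨q, hq⟩ := exists_factor p (cmp p ι) hinj (fun i => by
    rw [LinearMap.range_eq_top.2 (hsurj i)]; exact le_top)
  have hqh := isHom_of_factor hinj hph (hph.cmp hι) hq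
  have hqι : ∀ i v, q i (ι i v) = v := fun i v => hinj i (hq i (ι i v))
  rcases hX.2 (cmp ι q) (hι.cmp hqh) (fun i v => by simp [hqι]) with h | h
  · apply hθ0
    refine c0_ext fun i v => ?_
    have h3 := congrArg (fun c : C0 X X => c i (ι i (p i v))) h
    simp only [cmp_apply, hqι] at h3
    rw [hp] at h3
    simpa using h3
  · have h4 : rk (one X) ≤ rk θ := by
      rw [← h, ← htI, ← rk_of_inj ι hιi]
      exact rk_cmp_le_left _ _
    rw [rk_of_inj (one X) (fun i => Function.injective_id)] at h4
    omega

theorem exists_smaller {W X : VRep k Q} (hX : VIndec X) (hP : Function.Bijective (phi W X))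
    {θ₀ : C0 X X} (hθ₀ : IsHom θ₀) (hne₀ : θ₀ ≠ 0) (hni₀ : rk θ₀ < tdim X) :
    ∃ Y : VRep k Q, tdim Y < tdim X ∧ VIndec Y ∧ Function.Bijective (phi W Y) ∧
      ¬ Function.Surjective (phi Y Y) := by
  obtain ⟨θ, ⟨hθ, hθ0⟩, hmin'⟩ := exists_min (fun θ : C0 X X => IsHom θ ∧ θ ≠ 0) rk
    ⟨θ₀, hθ₀, hne₀⟩
  have hmin : ∀ η : C0 X X, IsHom η → η ≠ 0 → rk θ ≤ rk η := fun η h h' => hmin' η ⟨h, h'⟩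
  have hni : rk θ < tdim X := (hmin θ₀ hθ₀ hne₀).trans_lt hni₀
  have hsq := sq_zero_of_min hX hθ hθ0 hni hmin
  obtain ⟨I, ι, hι, hιi, hr⟩ := exists_sub X (fun i => LinearMap.range (θ i))
    (by rintro x _ ⟨v, rfl⟩; exact ⟨X.map x v, hθ x v⟩)
  obtain ⟨p, hp⟩ := exists_factor θ ι hιi (fun i => (hr i).ge)
  have hph := isHom_of_factor hιi hθ hι hp
  have htI : tdim I = rk θ := by
    rw [← rk_of_inj ι hιi]; exact Finset.sum_congr rfl fun i _ => by rw [hr]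
  have hps : ∀ i, Function.Surjective (p i) := by
    intro i w
    have : ι i w ∈ LinearMap.range (θ i) := hr i ▸ ⟨w, rfl⟩
    obtain ⟨v, hv⟩ := this
    exact ⟨v, hιi i (by rw [hp, hv])⟩
  obtain ⟨K, κ, hκ, hκi, hκr⟩ := exists_sub X (fun i => LinearMap.ker (θ i))
    (by
      intro x v hv
      rw [LinearMap.mem_ker] at hv ⊢
      rw [hθ, hv, map_zero])
  have hPK := perp_ker hP hθ hκ hκi hκr
  have hθκ : ∀ i v, θ i (κ i v) = 0 := fun i v => by
    have : κ i v ∈ LinearMap.ker (θ i) := hκr i ▸ ⟨v, rfl⟩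
    exact this
  have hpκ : ∀ i v, p i (κ i v) = 0 := fun i v => hιi i (by rw [hp, hθκ, map_zero])
  obtain ⟨j, hj⟩ := exists_factor ι κ hκi (fun i => by
    rw [hr, hκr]; rintro _ ⟨v, rfl⟩; exact hsq i v)
  have hjh := isHom_of_factor hκi hι hκ hj
  have hj0 : j ≠ 0 := by
    intro h
    apply hθ0
    refine c0_ext fun i v => ?_
    rw [← hp, ← hj, h]; simp
  obtain ⟨e, ⟨he, hee, hej⟩, hemin⟩ := exists_min
    (fun e : C0 K K => IsHom e ∧ (∀ i v, e i (e i v) = e i v) ∧ cmp e j ≠ 0) rk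
    ⟨one K, isHom_one K, fun _ _ => rfl, hj0⟩
  obtain ⟨Y, a, ha, hai, har⟩ := exists_sub K (fun i => LinearMap.range (e i))
    (by rintro x _ ⟨v, rfl⟩; exact ⟨K.map x v, he x v⟩)
  obtain ⟨b, hb⟩ := exists_factor e a hai (fun i => (har i).ge)
  have hbh := isHom_of_factor hai he ha hb
  have hba : ∀ i v, b i (a i v) = v := by
    intro i v
    apply hai
    rw [hb]
    have : a i v ∈ LinearMap.range (e i) := har i ▸ ⟨v, rfl⟩
    obtain ⟨w, hw⟩ := this
    rw [← hw, hee]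
  have hab : cmp a b = e := c0_ext hb
  have hYind : VIndec Y := indec_of_split_min (j := j) ha hbh hba (by rwa [hab])
    (by rw [hab]; exact fun e' h1 h2 h3 => hemin e' ⟨h1, h2, h3⟩)
  have hPY : Function.Bijective (phi W Y) := perp_of_epi_mono hPK.2 hPK.1 hbh ha
    (fun i v => ⟨a i v, hba i v⟩) hai
  -- alpha : I → Y
  have hα0 : cmp (cmp κ a) (cmp (cmp b j) p) ≠ 0 := by
    intro h
    apply hej
    refine c0_ext fun i v => ?_
    obtain ⟨w, rfl⟩ := hps i v
    have := congrArg (fun c : C0 X X => c i w) h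
    simp [hb] at this
    apply hκi
    simpa using this
  have hαi : ∀ i, Function.Injective (cmp b j i) := by
    apply inj_of_rk
    rw [htI]
    refine (hmin _ ((hκ.cmp ha).cmp ((hbh.cmp hjh).cmp hph)) hα0).trans ?_
    exact (rk_cmp_le_right _ _).trans (rk_cmp_le_left _ _)
  have htK : tdim K < tdim X := by
    by_contra hlt
    apply hθ0
    have := surj_of_rk κ (by rw [rk_of_inj κ hκi]; omega)
    refine c0_ext fun i v => ?_
    obtain ⟨w, rfl⟩ := this i v
    simpa using hθκ i w
  have htY : tdim Y < tdim X := by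
    refine lt_of_le_of_lt ?_ htK
    rw [← rk_of_inj a hai]
    exact rk_le_target a
  refine ⟨Y, htY, hYind, hPY, fun hYY => ?_⟩
  -- Ext(I,Y) = 0
  have hIY : Function.Surjective (phi I Y) := by
    intro c
    have : ∀ x, ∃ c' : Y.U (Q.src x) →ₗ[k] Y.U (Q.tgt x), c' ∘ₗ (cmp b j _) = c x := by
      intro x
      obtain ⟨s, hs⟩ := LinearMap.exists_leftInverse_of_injective (cmp b j (Q.src x))
        (LinearMap.ker_eq_bot.2 (hαi _))
      refine ⟨c x ∘ₗ s, ?_⟩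
      rw [LinearMap.comp_assoc, hs, LinearMap.comp_id]
    choose c' hc' using this
    obtain ⟨f, hf⟩ := hYY c'
    refine ⟨cmp f (cmp b j), ?_⟩
    funext x
    ext v
    rw [← hc', ← hf]
    simp [phi_apply, hjh x, hbh x]
  -- extend b to X
  have hext : ∃ r : C0 X Y, IsHom r ∧ ∀ i v, r i (κ i v) = b i v := by
    have h1 : ∀ i, ∃ r : X.U i →ₗ[k] Y.U i, r ∘ₗ κ i = b i := by
      intro i
      obtain ⟨s, hs⟩ := LinearMap.exists_leftInverse_of_injective (κ i)
        (LinearMap.ker_eq_bot.2 (hκi _))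
      refine ⟨b i ∘ₗ s, ?_⟩
      rw [LinearMap.comp_assoc, hs, LinearMap.comp_id]
    choose r hr' using h1
    have hrκ : ∀ i v, r i (κ i v) = b i v := fun i v => by rw [← hr']; rfl
    have h2 : ∀ x, ∃ c : I.U (Q.src x) →ₗ[k] Y.U (Q.tgt x), c ∘ₗ p _ = phi X Y r x := by
      intro x
      obtain ⟨s, hs⟩ := LinearMap.exists_rightInverse_of_surjective (p (Q.src x))
        (LinearMap.range_eq_top.2 (hps _))
      refine ⟨phi X Y r x ∘ₗ s, ?_⟩
      ext v
      have hk : v - s (p _ v) ∈ LinearMap.ker (θ (Q.src x)) := by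
        rw [LinearMap.mem_ker, ← hp, map_sub]
        have := congrArg (fun f => f (p _ v)) hs
        simp at this
        rw [this, sub_self, map_zero]
      rw [← hκr] at hk
      obtain ⟨w, hw⟩ := hk
      have : phi X Y r x (v - s (p _ v)) = 0 := by
        rw [← hw, phi_apply, ← hκ, hrκ, hrκ, hbh, sub_self]
      rw [map_sub, sub_eq_zero] at this
      simpa using this.symm
    choose c hc using h2
    obtain ⟨f, hf⟩ := hIY c
    refine ⟨r - cmp f p, ?_, fun i v => by simp [hrκ, hpκ]⟩
    rw [isHom_iff, map_sub, sub_eq_zero]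
    funext x
    rw [← hc, ← hf]
    ext v
    simp [phi_apply, hph x]
  obtain ⟨r, hrh, hrκ⟩ := hext
  have hid : ∀ i v, r i (κ i (a i v)) = v := fun i v => by rw [hrκ, hba]
  rcases hX.2 (cmp (cmp κ a) r) ((hκ.cmp ha).cmp hrh) (fun i v => by simp [hid]) with h | h
  · have : one Y = 0 := by
      refine c0_ext fun i v => ?_
      have := congrArg (fun c : C0 X X => r i (c i (κ i (a i v)))) h
      simpa [hid] using this
    have h0 : rk (one Y) = tdim Y := rk_of_inj _ (fun i => Function.injective_id)
    have h5 := hYind.1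
    rw [← h0, this] at h5
    rw [rk_zero] at h5
    omega
  · have h0 : rk (one X) = tdim X := rk_of_inj _ (fun i => Function.injective_id)
    rw [← h] at h0
    have := (rk_cmp_le_right (cmp κ a) r).trans (rk_le_target r)
    omega

noncomputable def vdim (A : VRep k Q) : Fin Q.n → ℤ := fun i => (Module.finrank k (A.U i) : ℤ)

theorem euler_eq (A B : VRep k Q) :
    Q.euler A.vdim B.vdim = (Module.finrank k (LinearMap.ker (phi A B)) : ℤ)
      - Module.finrank k (C1 A B ⧸ LinearMap.range (phi A B)) := by
  have h1 := LinearMap.finrank_range_add_finrank_ker (phi A B)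
  have h2 := Submodule.finrank_quotient_add_finrank (LinearMap.range (phi A B))
  have h3 : Module.finrank k (C0 A B) =
      ∑ i, Module.finrank k (A.U i) * Module.finrank k (B.U i) := by
    rw [Module.finrank_pi_fintype]
    exact Finset.sum_congr rfl fun i _ => Module.finrank_linearMap _ _ _ _
  have h4 : Module.finrank k (C1 A B) =
      ∑ x, Module.finrank k (A.U (Q.src x)) * Module.finrank k (B.U (Q.tgt x)) := by
    rw [Module.finrank_pi_fintype]
    exact Finset.sum_congr rfl fun i _ => Module.finrank_linearMap _ _ _ _
  have h5 : Q.euler A.vdim B.vdim = (Module.finrank k (C0 A B) : ℤ) - Module.finrank k (C1 A B) := by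
    rw [h3, h4]
    push_cast
    rfl
  rw [h5]
  omega

theorem exists_noninj [IsAlgClosed k] {X : VRep k Q} (hX : 0 < tdim X)
    (h : ∀ θ : C0 X X, IsHom θ → θ ≠ 0 → tdim X ≤ rk θ) :
    Module.finrank k (LinearMap.ker (phi X X)) = 1 := by
  have hone : one X ≠ 0 := by
    intro h0
    have h1 : rk (one X) = tdim X := rk_of_inj _ (fun i => Function.injective_id)
    rw [h0] at h1
    rw [rk_zero] at h1
    omega
  obtain ⟨i, -, hi⟩ : ∃ i ∈ Finset.univ, Module.finrank k (X.U i) ≠ 0 := by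
    by_contra hcon
    push Not at hcon
    have : tdim X = 0 := Finset.sum_eq_zero hcon
    omega
  have : Nontrivial (X.U i) := Module.nontrivial_of_finrank_pos (R := k) (Nat.pos_of_ne_zero hi)
  rw [finrank_eq_one_iff_of_nonzero' (⟨one X, (isHom_iff _).1 (isHom_one X)⟩ : LinearMap.ker (phi X X))
    (by intro h0; exact hone (congrArg Subtype.val h0))]
  rintro ⟨f, hf⟩
  obtain ⟨c, hc⟩ := Module.End.exists_eigenvalue (f i : Module.End k (X.U i))
  obtain ⟨v, hv⟩ := hc.exists_hasEigenvector
  refine ⟨c, Subtype.ext ?_⟩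
  have hfh := (isHom_iff _).2 hf
  by_contra hne
  have h1 := inj_of_rk _ (h (c • one X - f) (((isHom_one X).smul c).sub hfh) (by
    intro h0; exact hne (sub_eq_zero.1 h0))) i
  apply hv.2
  apply h1
  have := hv.apply_eq_smul
  simp [this]

theorem main_vrep [IsAlgClosed k] {W : VRep k Q}
    (hpos : ∀ X : VRep k Q, 0 < tdim X → Function.Bijective (phi W X) → 0 < Q.euler X.vdim X.vdim) :
    ∀ (N : ℕ) (X : VRep k Q), tdim X = N → VIndec X → Function.Bijective (phi W X) →
      Q.euler X.vdim X.vdim = 1 ∧ Function.Surjective (phi X X) := by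
  intro N
  induction N using Nat.strong_induction_on with
  | _ N ih =>
    intro X hN hX hP
    have hbrick : Module.finrank k (LinearMap.ker (phi X X)) = 1 := by
      apply exists_noninj hX.1
      intro θ hθ hθ0
      by_contra hlt
      obtain ⟨Y, h1, h2, h3, h4⟩ := exists_smaller hX hP hθ hθ0 (not_le.1 hlt)
      exact h4 (ih _ (hN ▸ h1) Y rfl h2 h3).2
    have h1 := hpos X hX.1 hP
    have h2 := euler_eq X X
    have h3 : Module.finrank k (C1 X X ⧸ LinearMap.range (phi X X)) = 0 := by omega
    refine ⟨by rw [h2, hbrick, h3]; simp, ?_⟩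
    have h4 := Submodule.finrank_quotient_add_finrank (LinearMap.range (phi X X))
    rw [h3, zero_add] at h4
    exact LinearMap.range_eq_top.1 (Submodule.eq_top_of_finrank_eq h4)

end VRep

namespace FinQuiver

/-- Euler form as a bilinear map. -/
def eulerB (Q : FinQuiver) : (Fin Q.n → ℤ) →ₗ[ℤ] (Fin Q.n → ℤ) →ₗ[ℤ] ℤ :=
  LinearMap.mk₂ ℤ Q.euler
    (by intro a b c; simp only [euler, Pi.add_apply, add_mul, Finset.sum_add_distrib]; ring)
    (by intro c a b; simp only [euler, Pi.smul_apply, smul_eq_mul, mul_assoc, ← Finset.mul_sum]; ring)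
    (by intro a b c; simp only [euler, Pi.add_apply, mul_add, Finset.sum_add_distrib]; ring)
    (by
      intro c a b
      simp only [euler, Pi.smul_apply, smul_eq_mul, mul_left_comm _ c, ← Finset.mul_sum]; ring)

theorem eulerB_apply (Q : FinQuiver) (a b) : Q.eulerB a b = Q.euler a b := rfl

theorem null_radical {Q : FinQuiver} (hq : ∀ d, 0 ≤ Q.euler d d) {δ : Fin Q.n → ℤ}
    (hδ : Q.euler δ δ = 0) (w : Fin Q.n → ℤ) : Q.euler δ w + Q.euler w δ = 0 := by
  by_contra hne
  have key : ∀ t : ℤ, 0 ≤ Q.euler w w + t * (Q.euler δ w + Q.euler w δ) := by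
    intro t
    have h := hq (w + t • δ)
    rw [← eulerB_apply] at h
    simp only [map_add, map_smul, LinearMap.add_apply, LinearMap.smul_apply, smul_eq_mul,
      eulerB_apply, hδ] at h
    linarith
  have h0 := hq w
  have h1 := key (-(Q.euler w w + 1) * (Q.euler δ w + Q.euler w δ))
  have h2 : 0 < (Q.euler δ w + Q.euler w δ) ^ 2 := by positivity
  nlinarith

theorem pos_on_perp {Q : FinQuiver} (hq : ∀ d, 0 ≤ Q.euler d d) {δ : Fin Q.n → ℤ}
    (hδ : Q.IsNullRoot δ) {w : Fin Q.n → ℤ} (hw : Q.euler δ w ≠ 0) {d : Fin Q.n → ℤ}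
    (hd : Q.euler w d = 0) (h0 : Q.euler d d = 0) : d = 0 := by
  obtain ⟨m, rfl⟩ := hδ.2.2 d h0
  have h1 := null_radical hq hδ.2.1 w
  have h2 : m * Q.euler w δ = 0 := by
    rw [← hd, ← eulerB_apply, ← eulerB_apply, map_smul, smul_eq_mul]
  rcases mul_eq_zero.1 h2 with h | h
  · rw [h, zero_smul]
  · exact absurd (by linarith) hw

theorem finite_roots {Q : FinQuiver} (hq : ∀ d, 0 ≤ Q.euler d d) {δ : Fin Q.n → ℤ}
    (hδ : Q.IsNullRoot δ) {w : Fin Q.n → ℤ} (hw : Q.euler δ w ≠ 0) :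
    {d : Fin Q.n → ℤ | Q.euler d d = 1 ∧ Q.euler w d = 0}.Finite := by
  set D := {d : Fin Q.n → ℤ | Q.euler d d = 1 ∧ Q.euler w d = 0} with hD
  obtain ⟨T, hTD, hT⟩ := (Submodule.fg_span_iff_fg_span_finset_subset D).1
    (IsNoetherian.noetherian (Submodule.span ℤ D))
  let B : (Fin Q.n → ℤ) →ₗ[ℤ] (Fin Q.n → ℤ) →ₗ[ℤ] ℤ := Q.eulerB + Q.eulerB.flip
  have hB : ∀ a b, B a b = Q.euler a b + Q.euler b a := fun _ _ => rfl
  have hfin : (Set.pi Set.univ (fun _ : T => Set.Icc (-2 : ℤ) 2)).Finite :=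
    Set.Finite.pi fun _ => Set.finite_Icc _ _
  refine Set.Finite.of_injOn (f := fun d (b : T) => B d b) ?_ ?_ hfin
  · rintro d ⟨hd, -⟩ ⟨b, hb⟩ -
    obtain ⟨hb1, -⟩ := hTD hb
    have e1 := hq (d + b)
    have e2 := hq (d - b)
    rw [← eulerB_apply] at e1 e2
    simp only [map_add, map_sub, LinearMap.add_apply, LinearMap.sub_apply, eulerB_apply, hd,
      hb1] at e1 e2
    simp only [hB, Set.mem_Icc]
    constructor <;> linarith
  · intro d hd d' hd' h
    have hsub : d - d' ∈ Submodule.span ℤ D :=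
      Submodule.sub_mem _ (Submodule.subset_span hd) (Submodule.subset_span hd')
    have hker : Submodule.span ℤ D ≤ LinearMap.ker (B (d - d')) := by
      rw [hT, Submodule.span_le]
      intro b hb
      have := congrFun h ⟨b, hb⟩
      simp only [SetLike.mem_coe, LinearMap.mem_ker, map_sub, LinearMap.sub_apply]
      exact sub_eq_zero.2 this
    have h1 := hker hsub
    rw [LinearMap.mem_ker, hB] at h1
    have h2 : Q.euler (d - d') (d - d') = 0 := by linarith
    have h3 : Q.euler w (d - d') = 0 := by
      rw [← eulerB_apply, map_sub, eulerB_apply, eulerB_apply, hd.2, hd'.2, sub_zero]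
    exact sub_eq_zero.1 (pos_on_perp hq hδ hw h3 h2)

end FinQuiver

/-- Polynomial lifting of a kernel vector along a pencil of linear maps. -/
theorem poly_lift {k : Type} [Field k] {E F : Type} [AddCommGroup E] [Module k E]
    [AddCommGroup F] [Module k F] [FiniteDimensional k F]
    (φ ψ : E →ₗ[k] F) (hφ : Function.Surjective φ) (u : E) (hu : φ u = 0) :
    ∃ G : k → E, (∀ ℓ : E →ₗ[k] k, ∃ p : Polynomial k, ∀ t, ℓ (G t) = p.eval t) ∧ G 0 = u ∧
      ∀ t, φ (G t) + t • ψ (G t) = 0 := by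
  obtain ⟨s, hs⟩ := LinearMap.exists_rightInverse_of_surjective φ (LinearMap.range_eq_top.2 hφ)
  have hs' : ∀ v, φ (s v) = v := fun v => congrArg (fun f => f v) hs
  let b := Module.finBasis k F
  let A := LinearMap.toMatrix b b (ψ ∘ₗ s)
  let Mt : k → Matrix _ _ k := fun t => 1 + t • A
  let y := b.equivFun (ψ u)
  let g : k → F := fun t => b.equivFun.symm ((Mt t).adjugate *ᵥ (t • y))
  let P : Matrix _ _ (Polynomial k) := 1 + (Polynomial.X : Polynomial k) • A.map Polynomial.C
  have hP : ∀ t, (Polynomial.evalRingHom t).mapMatrix P = Mt t := by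
    intro t
    ext i j
    by_cases hij : i = j <;> simp [P, Mt, hij, mul_comm t]
  have hdet : ∀ t, (Mt t).det = P.det.eval t := by
    intro t
    rw [← hP, ← RingHom.map_det]
    rfl
  have hadj : ∀ t i j, (Mt t).adjugate i j = (P.adjugate i j).eval t := by
    intro t i j
    rw [← hP, ← RingHom.map_adjugate]
    rfl
  refine ⟨fun t => (Mt t).det • u - s (g t), ?_, ?_, ?_⟩
  · intro ℓ
    refine ⟨P.det * Polynomial.C (ℓ u) - ∑ j, (∑ l, P.adjugate j l * (Polynomial.X * Polynomial.C (y l)))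
      * Polynomial.C (ℓ (s (b j))), fun t => ?_⟩
    simp only [map_sub, map_smul, g, Module.Basis.equivFun_symm_apply, map_sum, hdet,
      Polynomial.eval_sub, Polynomial.eval_mul, Polynomial.eval_C, Polynomial.eval_finsetSum,
      smul_eq_mul, Matrix.mulVec, dotProduct, hadj, Pi.smul_apply, Polynomial.eval_X]
  · simp [Mt, g]
  · intro t
    have h1 : g t + t • ψ (s (g t)) = ((Mt t).det * t) • ψ u := by
      apply b.equivFun.injective
      have e1 : b.equivFun (ψ (s (g t))) = A *ᵥ b.equivFun (g t) := by
        have := LinearMap.toMatrix_mulVec_repr b b (ψ ∘ₗ s) (g t)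
        simpa [A] using this.symm
      have e2 : b.equivFun (g t) = (Mt t).adjugate *ᵥ (t • y) :=
        b.equivFun.apply_symm_apply _
      rw [map_add, map_smul, map_smul, e1]
      have e3 : b.equivFun (g t) + t • A *ᵥ b.equivFun (g t) = Mt t *ᵥ b.equivFun (g t) := by
        simp [Mt, Matrix.add_mulVec, Matrix.smul_mulVec]
      rw [e3, e2, Matrix.mulVec_mulVec, Matrix.mul_adjugate, Matrix.smul_mulVec, Matrix.one_mulVec,
        smul_smul]
    simp only [map_sub, map_smul, hu, smul_zero, hs', zero_sub, smul_sub]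
    rw [smul_smul, mul_comm t, ← h1]
    abel

namespace QRep

variable {k : Type} [Field k] {Q : FinQuiver}

theorem homSpace_eq_ker (M N : QRep k Q) : homSpace M N = LinearMap.ker (extMap M N) := by
  ext f
  rw [LinearMap.mem_ker, funext_iff]
  exact forall_congr' fun x => sub_eq_zero.symm

theorem homDim_eq_zero_iff (M N : QRep k Q) :
    homDim M N = 0 ↔ Function.Injective (extMap M N) := by
  unfold homDim
  rw [homSpace_eq_ker, Submodule.finrank_eq_zero, LinearMap.ker_eq_bot]

theorem rPerp_iff (M N : QRep k Q) : RPerp M N ↔ Function.Bijective (extMap M N) := by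
  unfold RPerp
  rw [homDim_eq_zero_iff, extDim_eq_zero_iff]
  rfl

theorem rPerp_summand {W V M : QRep k Q} (hW : IsSummand W V) (h : RPerp V M) : RPerp W M := by
  rw [rPerp_iff] at *
  obtain ⟨i, hi, p, hp, hpi⟩ := hW
  constructor
  · rw [injective_iff_map_eq_zero]
    intro f hf
    have h1 : extMap V M (fun j => f j * p j) = 0 := by
      funext x
      have hp' := hp x
      have := congrFun hf x
      simp only [extMap, LinearMap.coe_mk, AddHom.coe_mk, Pi.zero_apply] at this ⊢
      rw [Matrix.mul_assoc, hp', ← Matrix.mul_assoc, ← Matrix.mul_assoc, ← Matrix.sub_mul, this,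
        Matrix.zero_mul]
    have h2 := h.1 (h1.trans (map_zero _).symm)
    funext j
    have := congrArg (fun A : Matrix (Fin (M.d j)) (Fin (V.d j)) k => A * i j) (congrFun h2 j)
    simpa [Matrix.mul_assoc, hpi] using this
  · intro c
    obtain ⟨f, hf⟩ := h.2 (fun x => (c x * p (Q.src x) :
      Matrix (Fin (M.d (Q.tgt x))) (Fin (V.d (Q.src x))) k))
    refine ⟨fun j => f j * i j, ?_⟩
    funext x
    have hi' := hi x
    have := congrArg (fun A : Matrix (Fin (M.d (Q.tgt x))) (Fin (V.d (Q.src x))) k =>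
      A * i (Q.src x)) (congrFun hf x)
    simp only [extMap, LinearMap.coe_mk, AddHom.coe_mk] at this ⊢
    rw [Matrix.mul_assoc (c x), hpi, Matrix.mul_one, Matrix.sub_mul, Matrix.mul_assoc, ← hi'] at this
    rw [← this, Matrix.mul_assoc, Matrix.mul_assoc]

theorem exists_poly_iso (d : Fin Q.n → ℕ)
    (m X : ∀ x : Fin Q.a, Matrix (Fin (d (Q.tgt x))) (Fin (d (Q.src x))) k)
    (h : extDim (⟨d, m⟩ : QRep k Q) ⟨d, m⟩ = 0) :
    ∃ p : Polynomial k, p ≠ 0 ∧ ∀ t, p.eval t ≠ 0 →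
      ∃ f ∈ homSpace (⟨d, m⟩ : QRep k Q) ⟨d, m + t • X⟩, ∀ i, IsUnit ((f i : Matrix (Fin (d i)) (Fin (d i)) k)) := by
  rw [extDim_eq_zero_iff] at h
  let ψ : (∀ i, Matrix (Fin (d i)) (Fin (d i)) k) →ₗ[k]
      (∀ x : Fin Q.a, Matrix (Fin (d (Q.tgt x))) (Fin (d (Q.src x))) k) :=
    { toFun := fun f x => - (X x * f (Q.src x))
      map_add' := by
        intro f g; funext x
        simp only [Pi.add_apply, Matrix.mul_add]
        abel
      map_smul' := by
        intro c f; funext x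
        simp }
  obtain ⟨G, hG, hG0, hGt⟩ := poly_lift (extMap (⟨d, m⟩ : QRep k Q) ⟨d, m⟩) ψ h
    (fun i => (1 : Matrix (Fin (d i)) (Fin (d i)) k)) (by
      funext x
      simp [extMap])
  have hG' : ∀ i a b, ∃ p : Polynomial k, ∀ t, G t i a b = p.eval t := fun i a b =>
    hG (Matrix.entryLinearMap k k a b ∘ₗ LinearMap.proj i)
  choose q hq using hG'
  have hdet : ∀ i t, Matrix.det (G t i : Matrix (Fin (d i)) (Fin (d i)) k)
      = (Matrix.det (Matrix.of (q i))).eval t := by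
    intro i t
    have : (G t i : Matrix (Fin (d i)) (Fin (d i)) k)
        = (Polynomial.evalRingHom t).mapMatrix (Matrix.of (q i)) := by
      ext a b
      simpa using hq i a b t
    rw [this, ← RingHom.map_det]
    rfl
  refine ⟨∏ i, Matrix.det (Matrix.of (q i)), ?_, ?_⟩
  · rw [Finset.prod_ne_zero_iff]
    intro i _ h0
    have h1 := hdet i 0
    rw [h0, hG0] at h1
    simp at h1
  · intro t ht
    rw [Polynomial.eval_prod, Finset.prod_ne_zero_iff] at ht
    refine ⟨G t, ?_, fun i => ?_⟩
    · intro x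
      have h1 := congrFun (hGt t) x
      simp only [extMap, ψ, LinearMap.coe_mk, AddHom.coe_mk, Pi.add_apply, Pi.smul_apply,
        Pi.zero_apply] at h1
      simp only [Pi.add_apply, Pi.smul_apply, Matrix.add_mul, Matrix.smul_mul]
      rw [← sub_eq_zero, ← h1, smul_neg]
      abel
    · rw [Matrix.isUnit_iff_isUnit_det, isUnit_iff_ne_zero, hdet]
      exact ht i (Finset.mem_univ i)

theorem rigid_iso [Infinite k] (M N : QRep k Q) (hM : extDim M M = 0) (hN : extDim N N = 0)
    (h : M.dimVec = N.dimVec) : IsoRep M N := by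
  obtain ⟨d, m⟩ := M
  obtain ⟨d', m'⟩ := N
  have : d = d' := by
    funext i
    have := congrFun h i
    simpa [dimVec] using this
  subst this
  obtain ⟨p, hp, hpt⟩ := exists_poly_iso d m (m' - m) hM
  obtain ⟨r, hr, hrt⟩ := exists_poly_iso d m' (m - m') hN
  have hpr : p * r.comp (1 - Polynomial.X) ≠ 0 := by
    refine mul_ne_zero hp fun h0 => hr ?_
    have := congrArg (fun s => s.comp (1 - Polynomial.X)) h0
    simpa [Polynomial.comp_assoc] using this
  obtain ⟨t, ht⟩ : ∃ t, (p * r.comp (1 - Polynomial.X)).eval t ≠ 0 := by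
    by_contra hcon
    push Not at hcon
    exact hpr (Polynomial.funext fun t => by simpa using hcon t)
  simp only [Polynomial.eval_mul, Polynomial.eval_comp, Polynomial.eval_sub, Polynomial.eval_one,
    Polynomial.eval_X] at ht
  obtain ⟨f, hf, hfu⟩ := hpt t (left_ne_zero_of_mul ht)
  obtain ⟨g, hg, hgu⟩ := hrt (1 - t) (right_ne_zero_of_mul ht)
  have hL : m' + (1 - t) • (m - m') = m + t • (m' - m) := by
    funext x
    ext a b
    simp only [Pi.add_apply, Pi.smul_apply, Pi.sub_apply, Matrix.add_apply, Matrix.smul_apply,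
      Matrix.sub_apply, smul_eq_mul]
    ring
  rw [hL] at hg
  have hgd : ∀ i, IsUnit (Matrix.det (g i : Matrix (Fin (d i)) (Fin (d i)) k)) := fun i =>
    (Matrix.isUnit_iff_isUnit_det _).1 (hgu i)
  refine ⟨fun i => (g i : Matrix (Fin (d i)) (Fin (d i)) k)⁻¹ * f i, ?_, fun i => ?_⟩
  · intro x
    have hfx := hf x
    have hgx := hg x
    simp only at hfx hgx ⊢
    rw [Matrix.mul_assoc, hfx]
    generalize (m + t • (m' - m)) x = L at *
    have : (g (Q.tgt x) : Matrix (Fin (d (Q.tgt x))) (Fin (d (Q.tgt x))) k)⁻¹ * L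
        = m' x * (g (Q.src x) : Matrix (Fin (d (Q.src x))) (Fin (d (Q.src x))) k)⁻¹ := by
      have e1 : L = g (Q.tgt x) * m' x * (g (Q.src x) : Matrix (Fin (d (Q.src x))) (Fin (d (Q.src x))) k)⁻¹ := by
        rw [hgx, Matrix.mul_assoc, Matrix.mul_nonsing_inv _ (hgd _), Matrix.mul_one]
      rw [e1, Matrix.mul_assoc, ← Matrix.mul_assoc, Matrix.nonsing_inv_mul _ (hgd _),
        Matrix.one_mul]
    rw [← Matrix.mul_assoc, this, Matrix.mul_assoc]
  · have hu : IsUnit ((g i : Matrix (Fin (d i)) (Fin (d i)) k)⁻¹ * f i) := by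
      refine IsUnit.mul ?_ (hfu i)
      rw [Matrix.isUnit_nonsing_inv_iff]
      exact hgu i
    have h1 := Matrix.mulVec_injective_iff_isUnit.2 hu
    have h2 := Matrix.mulVec_surjective_iff_isUnit.2 hu
    exact ⟨h1, h2⟩

/-- The abstract representation of a matrix representation. -/
noncomputable def toV (M : QRep k Q) : VRep k Q where
  U := fun i => Fin (M.d i) → k
  map := fun x => Matrix.toLin' (M.mat x)

noncomputable def e0 (M N : QRep k Q) :
    (∀ i, Matrix (Fin (N.d i)) (Fin (M.d i)) k) ≃ₗ[k] VRep.C0 M.toV N.toV :=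
  LinearEquiv.piCongrRight fun _ => Matrix.toLin'

noncomputable def e1 (M N : QRep k Q) :
    (∀ x : Fin Q.a, Matrix (Fin (N.d (Q.tgt x))) (Fin (M.d (Q.src x))) k) ≃ₗ[k]
      VRep.C1 M.toV N.toV :=
  LinearEquiv.piCongrRight fun _ => Matrix.toLin'

theorem phi_e0 (M N : QRep k Q) (f) :
    VRep.phi M.toV N.toV (e0 M N f) = e1 M N (extMap M N f) := by
  funext x
  change Matrix.toLin' (f (Q.tgt x)) ∘ₗ Matrix.toLin' (M.mat x)
    - Matrix.toLin' (N.mat x) ∘ₗ Matrix.toLin' (f (Q.src x))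
    = Matrix.toLin' (f (Q.tgt x) * M.mat x - N.mat x * f (Q.src x))
  rw [map_sub, Matrix.toLin'_mul, Matrix.toLin'_mul]

theorem phi_eq (M N : QRep k Q) :
    (VRep.phi M.toV N.toV : VRep.C0 M.toV N.toV → _) = e1 M N ∘ extMap M N ∘ (e0 M N).symm := by
  funext g
  have := phi_e0 M N ((e0 M N).symm g)
  rw [LinearEquiv.apply_symm_apply] at this
  exact this

theorem phi_bij (M N : QRep k Q) :
    Function.Bijective (VRep.phi M.toV N.toV) ↔ RPerp M N := by
  rw [phi_eq, rPerp_iff, (e1 M N).bijective.of_comp_iff', (e0 M N).symm.bijective.of_comp_iff]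

theorem phi_surj (M N : QRep k Q) :
    Function.Surjective (VRep.phi M.toV N.toV) ↔ extDim M N = 0 := by
  rw [phi_eq, extDim_eq_zero_iff, EquivLike.comp_surjective, EquivLike.surjective_comp]

theorem vdim_toV (M : QRep k Q) : M.toV.vdim = M.dimVec := by
  funext i
  exact congrArg Nat.cast (Module.finrank_fin_fun k)

theorem vindec_toV {M : QRep k Q} (h : Indec M) : M.toV.VIndec := by
  constructor
  · obtain ⟨i, hi⟩ := h.1
    refine Finset.sum_pos' (fun _ _ => Nat.zero_le _) ⟨i, Finset.mem_univ i, ?_⟩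
    have : Module.finrank k (M.toV.U i) = M.d i := Module.finrank_fin_fun k
    omega
  · intro e he hee
    have he0 : e = e0 M M ((e0 M M).symm e) := ((e0 M M).apply_symm_apply e).symm
    set f := (e0 M M).symm e with hf
    have hfh : f ∈ homSpace M M := by
      rw [homSpace_eq_ker, LinearMap.mem_ker]
      rw [VRep.isHom_iff, he0, phi_e0] at he
      exact (LinearEquiv.map_eq_zero_iff _).1 he
    have hff : ∀ i, f i * f i = f i := by
      intro i
      apply Matrix.toLin'.injective
      rw [Matrix.toLin'_mul]
      ext1 v
      have : e i = Matrix.toLin' (f i) := congrFun he0 i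
      rw [← this]
      ext1
      exact hee i _
    rcases h.2 f hfh hff with h0 | h1
    · left; rw [he0, h0, map_zero]
    · right
      rw [he0, h1]
      funext i
      exact Matrix.toLin'_one

end QRep

open QRep in
/-- over a Euclidean quiver, if a rigid `V` has a non-regular
indecomposable summand, then `V^⊥` contains no non-exceptional indecomposables
and has only finitely many indecomposables up to isomorphism. -/
theorem perp_finite_of_nonregular_summand (k : Type) [Field k] [IsAlgClosed k]
    (Q : FinQuiver) (hQ : Q.IsEuclidean) (δ : Fin Q.n → ℤ) (hδ : Q.IsNullRoot δ)
    (V : QRep k Q) (hV : extDim V V = 0)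
    (W : QRep k Q) (hW : IsSummand W V) (hWind : Indec W)
    (hWnr : Q.euler δ W.dimVec ≠ 0) :
    (∀ M : QRep k Q, Indec M → RPerp V M → extDim M M = 0) ∧
      ∃ l : List (QRep k Q), ∀ M : QRep k Q, Indec M → RPerp V M →
        ∃ N ∈ l, IsoRep M N := by
  have hq := hQ.2.2.1
  have hw : Q.euler δ W.toV.vdim ≠ 0 := by rwa [vdim_toV]
  have hperp : ∀ X : VRep k Q, Function.Bijective (VRep.phi W.toV X) →
      Q.euler W.toV.vdim X.vdim = 0 := by
    intro X hX
    rw [VRep.euler_eq, LinearMap.ker_eq_bot.2 hX.1, LinearMap.range_eq_top.2 hX.2, finrank_bot]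
    have h4 := Submodule.finrank_quotient_add_finrank (⊤ : Submodule k (VRep.C1 W.toV X))
    rw [finrank_top] at h4
    omega
  have hpos : ∀ X : VRep k Q, 0 < X.tdim → Function.Bijective (VRep.phi W.toV X) →
      0 < Q.euler X.vdim X.vdim := by
    intro X hX hP
    refine lt_of_le_of_ne (hq _) fun h0 => ?_
    have h1 := FinQuiver.pos_on_perp hq hδ hw (hperp X hP) h0.symm
    have : X.tdim = 0 := Finset.sum_eq_zero fun i _ => by
      have := congrFun h1 i
      simpa [VRep.vdim] using this
    omega
  have main : ∀ M : QRep k Q, Indec M → RPerp V M →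
      (Q.euler M.dimVec M.dimVec = 1 ∧ Q.euler W.toV.vdim M.dimVec = 0) ∧ extDim M M = 0 := by
    intro M hM hVM
    have hP := (phi_bij W M).2 (rPerp_summand hW hVM)
    obtain ⟨h1, h2⟩ := VRep.main_vrep hpos _ M.toV rfl (vindec_toV hM) hP
    have h3 := hperp _ hP
    rw [vdim_toV M] at h1 h3
    exact ⟨⟨h1, h3⟩, (phi_surj M M).1 h2⟩
  refine ⟨fun M hM hVM => (main M hM hVM).2, ?_⟩
  have hfin := FinQuiver.finite_roots hq hδ hw
  classical
  refine ⟨hfin.toFinset.toList.map (fun d =>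
    if h : ∃ N : QRep k Q, Indec N ∧ RPerp V N ∧ N.dimVec = d then h.choose else V), ?_⟩
  intro M hM hVM
  obtain ⟨hd, hMM⟩ := main M hM hVM
  have hex : ∃ N : QRep k Q, Indec N ∧ RPerp V N ∧ N.dimVec = M.dimVec := ⟨M, hM, hVM, rfl⟩
  refine ⟨hex.choose, ?_, ?_⟩
  · rw [List.mem_map]
    refine ⟨M.dimVec, ?_, dif_pos hex⟩
    rw [Finset.mem_toList, Set.Finite.mem_toFinset]
    exact hd
  · obtain ⟨h1, h2, h3⟩ := hex.choose_spec
    have : Infinite k := IsAlgClosed.instInfinite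
    exact rigid_iso M _ hMM (main _ h1 h2).2 h3.symm
end

section
/- Let Q be a Dynkin or Euclidean quiver, α a real Schur root, and d ∈ ℤ^n. Then d lies in the cone H_α^{ss} if and only if the unique indecomposable representation M(α) of dimension vector α is ⟨d,−⟩-semi-stable. -/
open Matrix BigOperators

open QRep

variable {k : Type} [Field k] {Q : FinQuiver}

/-- `e` is supported on the support of `M`. -/
def SupportedOn (M : QRep k Q) (e : Fin Q.n → ℤ) : Prop :=
  ∀ i, e i ≠ 0 → M.d i ≠ 0

/-- `M` is `⟨d,−⟩`-semi-stable: some semi-invariant `C^V` with `V` supported on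
the support of `M` and weight agreeing with a positive multiple of `⟨d,−⟩` there
does not vanish on `M`. -/
def SemiStableAt (d : Fin Q.n → ℤ) (M : QRep k Q) : Prop :=
  ∃ m : ℤ, 0 < m ∧ ∃ V : QRep k Q, SupportedOn M V.dimVec ∧
    (∀ e : Fin Q.n → ℤ, SupportedOn M e →
      Q.euler V.dimVec e = m * Q.euler d e) ∧
    RPerp V M

/-- Membership in the convex cone generated by a set of rational vectors. -/
def InCone {n : ℕ} (S : Set (Fin n → ℚ)) (v : Fin n → ℚ) : Prop :=
  ∃ l : List (ℚ × (Fin n → ℚ)), (∀ p ∈ l, 0 ≤ p.1 ∧ p.2 ∈ S) ∧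
    v = (l.map fun p => p.1 • p.2).sum

/-- `M` is a relative simple object of the left perpendicular category `^⊥V`. -/
def RelSimple (V M : QRep k Q) : Prop :=
  LPerp V M ∧ (∃ i, M.d i ≠ 0) ∧
    ∀ L, IsSubrep L M → LPerp V L → (∀ i, L.d i = 0) ∨ L.dimVec = M.dimVec

/-- Generators of the cone `H_α^{ss}`: dimension vectors of the relative simples
of `^⊥M(α)` and negatives of the dimension vectors of the indecomposable
projectives lying in `^⊥M(α)`. -/
def HssGens (Mα : QRep k Q) : Set (Fin Q.n → ℚ) :=
  {v | ∃ S : QRep k Q, RelSimple Mα S ∧ v = fun i => ((S.d i : ℚ))} ∪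
  {v | ∃ P : QRep k Q, Indec P ∧ IsProjRep P ∧ LPerp Mα P ∧
    v = fun i => -((P.d i : ℚ))}

namespace HssAux

theorem homDim_eq_zero_iff (M N : QRep k Q) :
    homDim M N = 0 ↔ ∀ f ∈ homSpace M N, f = 0 := by
  unfold homDim
  rw [Submodule.finrank_eq_zero, Submodule.eq_bot_iff]

theorem extDim_eq_zero_iff (M N : QRep k Q) :
    extDim M N = 0 ↔ Function.Surjective (extMap M N) := by
  unfold extDim
  rw [Module.finrank_eq_zero_iff_of_free, Submodule.Quotient.subsingleton_iff,
    LinearMap.range_eq_top]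

theorem homSpace_eq_ker (M N : QRep k Q) : homSpace M N = LinearMap.ker (extMap M N) := by
  ext f
  rw [LinearMap.mem_ker, funext_iff]
  exact forall_congr' fun x => sub_eq_zero.symm

theorem euler_eq (M N : QRep k Q) :
    Q.euler M.dimVec N.dimVec = (homDim M N : ℤ) - extDim M N := by
  have h1 := LinearMap.finrank_range_add_finrank_ker (extMap M N)
  have h2 := Submodule.finrank_quotient_add_finrank (LinearMap.range (extMap M N))
  rw [← homSpace_eq_ker] at h1
  simp only [Module.finrank_pi_fintype, Module.finrank_matrix, Fintype.card_fin,
    Module.finrank_self, mul_one] at h1 h2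
  unfold homDim extDim FinQuiver.euler dimVec
  have e1 : (∑ i, (M.d i : ℤ) * N.d i) = ((∑ i, N.d i * M.d i : ℕ) : ℤ) := by
    push_cast; exact Finset.sum_congr rfl fun _ _ => mul_comm _ _
  have e2 : (∑ x, (M.d (Q.src x) : ℤ) * N.d (Q.tgt x))
      = ((∑ x, N.d (Q.tgt x) * M.d (Q.src x) : ℕ) : ℤ) := by
    push_cast; exact Finset.sum_congr rfl fun _ _ => mul_comm _ _
  rw [e1, e2, ← h1, ← h2]
  push_cast
  ring

/-- Complement data for an injective matrix. -/
theorem exists_compl {n a : ℕ} (f : Matrix (Fin n) (Fin a) k)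
    (hf : Function.Injective (Matrix.mulVecLin f)) :
    ∃ (b : ℕ) (g : Matrix (Fin b) (Fin n) k) (s : Matrix (Fin n) (Fin b) k)
      (t : Matrix (Fin a) (Fin n) k), b + a = n ∧ g * f = 0 ∧ g * s = 1 ∧ f * t + s * g = 1 := by
  let F : (Fin a → k) →ₗ[k] (Fin n → k) := Matrix.mulVecLin f
  let R := LinearMap.range F
  let e := (Module.finBasis k ((Fin n → k) ⧸ R)).equivFun
  let G : (Fin n → k) →ₗ[k] (Fin _ → k) := e.toLinearMap ∘ₗ R.mkQ
  have hG : Function.Surjective G := e.surjective.comp R.mkQ_surjective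
  obtain ⟨S, hS⟩ := LinearMap.exists_rightInverse_of_surjective G (LinearMap.range_eq_top.2 hG)
  obtain ⟨T, hT⟩ := LinearMap.exists_leftInverse_of_injective F (LinearMap.ker_eq_bot.2 hf)
  have hGF : G ∘ₗ F = 0 := by
    ext1 v
    refine LinearMap.ext_ring ?_
    simp only [LinearMap.comp_apply, G]
    rw [(Submodule.Quotient.mk_eq_zero R).2 (LinearMap.mem_range_self F _) |> fun h =>
      (show R.mkQ _ = 0 from h)]
    simp
  have hGk : ∀ v, G v = 0 → ∃ w, F w = v := by
    intro v hv
    have : R.mkQ v = 0 := e.injective (by simpa [G] using hv)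
    exact (Submodule.Quotient.mk_eq_zero R).1 this
  have hFT : F ∘ₗ (T ∘ₗ (LinearMap.id - S ∘ₗ G)) + S ∘ₗ G = LinearMap.id := by
    apply LinearMap.ext
    intro v
    obtain ⟨w, hw⟩ := hGk (v - S (G v)) (by
      have := LinearMap.congr_fun hS (G v)
      simp only [LinearMap.comp_apply, LinearMap.id_apply] at this
      rw [map_sub, this, sub_self])
    have h2 : T (F w) = w := LinearMap.congr_fun hT w
    simp only [LinearMap.add_apply, LinearMap.comp_apply, LinearMap.sub_apply, LinearMap.id_apply]
    rw [← hw, h2, hw]; abel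
  have hfF : LinearMap.toMatrix' F = f := LinearMap.toMatrix'_toLin' f
  refine ⟨_, LinearMap.toMatrix' G, LinearMap.toMatrix' S,
    LinearMap.toMatrix' (T ∘ₗ (LinearMap.id - S ∘ₗ G)), ?_, ?_, ?_, ?_⟩
  · have h := Submodule.finrank_quotient_add_finrank R
    have h' : Module.finrank k R = a := by
      rw [LinearMap.finrank_range_of_inj hf]; simp
    rw [h'] at h
    simpa using h
  · conv_lhs => rw [← hfF]
    rw [← LinearMap.toMatrix'_comp, hGF, map_zero]
  · rw [← LinearMap.toMatrix'_comp, hS, LinearMap.toMatrix'_id]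
  · conv_lhs => rw [← hfF]
    rw [← LinearMap.toMatrix'_comp, ← LinearMap.toMatrix'_comp, ← map_add, hFT,
      LinearMap.toMatrix'_id]

/-- The quotient lemma. -/
theorem exists_quot (M L W : QRep k Q) (hL : IsSubrep L W) (hW : LPerp M W)
    (hLM : homDim L M = 0) :
    ∃ V : QRep k Q, LPerp M V ∧ ∀ i, V.d i + L.d i = W.d i := by
  obtain ⟨f, hf, hfi⟩ := hL
  choose b g s t hb hgf hgs hft using fun i => exists_compl (f i) (hfi i)
  have hf' : ∀ x, f (Q.tgt x) * L.mat x = W.mat x * f (Q.src x) := hf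
  let V : QRep k Q := ⟨b, fun x => g (Q.tgt x) * W.mat x * s (Q.src x)⟩
  have hg : ∀ x, g (Q.tgt x) * W.mat x = V.mat x * g (Q.src x) := by
    intro x
    have h1 : g (Q.tgt x) * W.mat x * (f (Q.src x) * t (Q.src x)) = 0 := by
      rw [← Matrix.mul_assoc, Matrix.mul_assoc (g _), ← hf', ← Matrix.mul_assoc, hgf]
      simp
    calc g (Q.tgt x) * W.mat x
        = g (Q.tgt x) * W.mat x * (f (Q.src x) * t (Q.src x) + s (Q.src x) * g (Q.src x)) := by
          rw [hft, Matrix.mul_one]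
      _ = V.mat x * g (Q.src x) := by
          rw [Matrix.mul_add, h1, zero_add, ← Matrix.mul_assoc]
  obtain ⟨hW1, hW2⟩ := hW
  rw [homDim_eq_zero_iff] at hW1 hLM
  rw [extDim_eq_zero_iff] at hW2
  refine ⟨V, ⟨(homDim_eq_zero_iff _ _).2 ?_, (extDim_eq_zero_iff _ _).2 ?_⟩, hb⟩
  · intro u hu
    have hu' : ∀ x, u (Q.tgt x) * V.mat x = M.mat x * u (Q.src x) := hu
    have h0 := hW1 (fun i => u i * g i) (by
      intro x
      show u (Q.tgt x) * g (Q.tgt x) * W.mat x = M.mat x * (u (Q.src x) * g (Q.src x))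
      rw [Matrix.mul_assoc, hg, ← Matrix.mul_assoc, hu', Matrix.mul_assoc])
    funext i
    have h1 : u i * g i = 0 := congrFun h0 i
    calc u i = u i * (g i * s i) := by rw [hgs]; exact (Matrix.mul_one _).symm
      _ = 0 := by rw [← Matrix.mul_assoc, h1, Matrix.zero_mul]
  · intro h
    obtain ⟨u, hu⟩ := hW2 (fun x => h x * g (Q.src x))
    have hu' : ∀ x, u (Q.tgt x) * W.mat x - M.mat x * u (Q.src x) = h x * g (Q.src x) :=
      fun x => congrFun hu x
    have h0 := hLM (fun i => u i * f i) (by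
      intro x
      show u (Q.tgt x) * f (Q.tgt x) * L.mat x = M.mat x * (u (Q.src x) * f (Q.src x))
      rw [Matrix.mul_assoc, hf', ← Matrix.mul_assoc, ← Matrix.mul_assoc, ← sub_eq_zero,
        ← Matrix.sub_mul, hu', Matrix.mul_assoc, hgf, Matrix.mul_zero])
    have h1 : ∀ i, u i * f i = 0 := fun i => congrFun h0 i
    have h2 : ∀ i, u i * s i * g i = u i := by
      intro i
      calc u i * s i * g i = u i * f i * t i + u i * s i * g i := by rw [h1]; simp
        _ = u i * (f i * t i + s i * g i) := by
          rw [Matrix.mul_add, Matrix.mul_assoc, Matrix.mul_assoc]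
        _ = u i := by rw [hft, Matrix.mul_one]
    refine ⟨fun i => u i * s i, ?_⟩
    funext x
    show u (Q.tgt x) * s (Q.tgt x) * (g (Q.tgt x) * W.mat x * s (Q.src x))
      - M.mat x * (u (Q.src x) * s (Q.src x)) = h x
    rw [← Matrix.mul_assoc, ← Matrix.mul_assoc, h2, ← Matrix.mul_assoc, ← Matrix.sub_mul, hu',
      Matrix.mul_assoc, hgs]
    exact Matrix.mul_one _

/-- Realization of a stable family of subspaces as a subrepresentation. -/
theorem exists_sub (W : QRep k Q) (U : ∀ i, Submodule k (Fin (W.d i) → k))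
    (hU : ∀ x, ∀ v ∈ U (Q.src x), (W.mat x).mulVec v ∈ U (Q.tgt x)) :
    ∃ L : QRep k Q, IsSubrep L W ∧ ∀ i, L.d i = Module.finrank k (U i) := by
  let e := fun i => (Module.finBasis k (U i)).equivFun
  let L : QRep k Q := ⟨fun i => Module.finrank k (U i), fun x =>
    LinearMap.toMatrix' ((e (Q.tgt x)).toLinearMap ∘ₗ
      (LinearMap.restrict (Matrix.mulVecLin (W.mat x)) (hU x)) ∘ₗ (e (Q.src x)).symm.toLinearMap)⟩
  refine ⟨L, ⟨fun i => LinearMap.toMatrix' ((U i).subtype ∘ₗ (e i).symm.toLinearMap), ?_, ?_⟩,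
    fun i => rfl⟩
  · intro x
    show LinearMap.toMatrix' _ * LinearMap.toMatrix' _ = _ * LinearMap.toMatrix' _
    have h3 : LinearMap.toMatrix' (Matrix.mulVecLin (W.mat x)) = W.mat x :=
      LinearMap.toMatrix'_toLin' (W.mat x)
    conv_rhs => rw [← h3]
    rw [← LinearMap.toMatrix'_comp, ← LinearMap.toMatrix'_comp]
    congr 1
    apply LinearMap.ext
    intro v
    simp
    rfl
  · intro i
    have : Matrix.mulVecLin (LinearMap.toMatrix' ((U i).subtype ∘ₗ (e i).symm.toLinearMap))
      = (U i).subtype ∘ₗ (e i).symm.toLinearMap := Matrix.toLin'_toMatrix' _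
    show Function.Injective (Matrix.mulVecLin (LinearMap.toMatrix' _))
    rw [this]
    exact (U i).injective_subtype.comp (e i).symm.injective

theorem isSubrep_refl (W : QRep k Q) : IsSubrep W W :=
  ⟨fun _ => 1, fun x => by simp, fun i => by simp [Function.Injective]⟩

theorem isSubrep_trans {A B C : QRep k Q} (h1 : IsSubrep A B) (h2 : IsSubrep B C) :
    IsSubrep A C := by
  obtain ⟨f, hf, hfi⟩ := h1
  obtain ⟨g, hg, hgi⟩ := h2
  have hf' : ∀ x, f (Q.tgt x) * A.mat x = B.mat x * f (Q.src x) := hf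
  have hg' : ∀ x, g (Q.tgt x) * B.mat x = C.mat x * g (Q.src x) := hg
  refine ⟨fun i => g i * f i, fun x => ?_, fun i => ?_⟩
  · rw [Matrix.mul_assoc, hf', ← Matrix.mul_assoc, hg', Matrix.mul_assoc]
  · rw [Matrix.mulVecLin_mul]
    exact (hgi i).comp (hfi i)

theorem isSubrep_le {A B : QRep k Q} (h : IsSubrep A B) (i : Fin Q.n) : A.d i ≤ B.d i := by
  obtain ⟨f, hf, hfi⟩ := h
  simpa using LinearMap.finrank_le_finrank_of_injective (hfi i)

/-- total dimension -/
def tot (W : QRep k Q) : ℕ := ∑ i, W.d i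

theorem eq_of_tot {A B : QRep k Q} (h : IsSubrep A B) (ht : tot B ≤ tot A) (i : Fin Q.n) :
    A.d i = B.d i := by
  have h1 : ∀ i ∈ Finset.univ, A.d i ≤ B.d i := fun i _ => isSubrep_le h i
  exact (Finset.sum_eq_sum_iff_of_le h1).1 (le_antisymm (Finset.sum_le_sum h1) ht) i
    (Finset.mem_univ i)

theorem exists_min (p : QRep k Q → Prop) (h : ∃ W, p W) :
    ∃ L, p L ∧ ∀ L', p L' → tot L ≤ tot L' := by
  obtain ⟨W, hW⟩ := h
  obtain ⟨L, hL, hm⟩ := WellFounded.has_min (measure (tot (k := k) (Q := Q))).wf {W | p W} ⟨W, hW⟩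
  exact ⟨L, hL, fun K hK => not_lt.1 (hm K hK)⟩

/-- Subrepresentation generated at the vertices where `M` vanishes. -/
theorem exists_gen (M W : QRep k Q) :
    ∃ U : QRep k Q, IsSubrep U W ∧ (∀ i, M.d i = 0 → U.d i = W.d i) ∧
      ∀ N : QRep k Q, (∀ i, M.d i = 0 → N.d i = 0) → homDim U N = 0 := by
  obtain ⟨U, ⟨hU, hUd⟩, hm⟩ := exists_min
    (fun U : QRep k Q => IsSubrep U W ∧ (∀ i, M.d i = 0 → U.d i = W.d i))
    ⟨W, isSubrep_refl W, fun _ _ => rfl⟩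
  refine ⟨U, hU, hUd, fun N hN => (homDim_eq_zero_iff _ _).2 fun f hf => ?_⟩
  have hf' : ∀ x, f (Q.tgt x) * U.mat x = N.mat x * f (Q.src x) := hf
  obtain ⟨K, hK, hKd⟩ := exists_sub U (fun i => LinearMap.ker (Matrix.mulVecLin (f i))) (by
    intro x v hv
    have hv' : (f (Q.src x)).mulVec v = 0 := hv
    show (f (Q.tgt x)).mulVec ((U.mat x).mulVec v) = 0
    rw [Matrix.mulVec_mulVec, hf', ← Matrix.mulVec_mulVec, hv', Matrix.mulVec_zero])
  have hz : ∀ i, M.d i = 0 → f i = 0 := by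
    intro i hi
    have := hN i hi
    ext a b
    exact (Fin.cast this a).elim0
  have hKU := eq_of_tot hK (hm K ⟨isSubrep_trans hK hU, fun i hi => by
    rw [hKd, hz i hi, ← hUd i hi, Matrix.mulVecLin_zero, LinearMap.ker_zero, finrank_top]
    simp⟩)
  funext i
  have h1 : LinearMap.ker (Matrix.mulVecLin (f i)) = ⊤ := by
    apply Submodule.eq_top_of_finrank_eq
    rw [← hKd, hKU]; simp
  have h2 := LinearMap.ker_eq_top.1 h1
  have h3 : LinearMap.toMatrix' (Matrix.mulVecLin (f i)) = f i := LinearMap.toMatrix'_toLin' (f i)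
  rw [← h3, h2, map_zero]
  rfl

/-- Existence of direct sums in the left perpendicular category. -/
theorem exists_add (M A B : QRep k Q) (hA : LPerp M A) (hB : LPerp M B) :
    ∃ W : QRep k Q, LPerp M W ∧ ∀ i, W.d i = A.d i + B.d i := by
  have key : ∀ a b : ℕ, ∃ (i : Matrix (Fin (a + b)) (Fin a) k) (j : Matrix (Fin (a + b)) (Fin b) k)
      (p : Matrix (Fin a) (Fin (a + b)) k) (q : Matrix (Fin b) (Fin (a + b)) k),
      p * i = 1 ∧ q * j = 1 ∧ p * j = 0 ∧ q * i = 0 ∧ i * p + j * q = 1 := by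
    intro a b
    refine ⟨Matrix.submatrix 1 id (Fin.castAdd b), Matrix.submatrix 1 id (Fin.natAdd a),
      Matrix.submatrix 1 (Fin.castAdd b) id, Matrix.submatrix 1 (Fin.natAdd a) id, ?_, ?_, ?_, ?_, ?_⟩
    · ext r c
      have h := congrFun₂ (Matrix.one_mul (1 : Matrix (Fin (a + b)) (Fin (a + b)) k)) (Fin.castAdd b r) (Fin.castAdd b c)
      rw [Matrix.mul_apply] at h ⊢
      simpa [Matrix.one_apply, Fin.ext_iff] using h
    · ext r c
      have h := congrFun₂ (Matrix.one_mul (1 : Matrix (Fin (a + b)) (Fin (a + b)) k)) (Fin.natAdd a r) (Fin.natAdd a c)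
      rw [Matrix.mul_apply] at h ⊢
      simpa [Matrix.one_apply, Fin.ext_iff] using h
    · ext r c
      have h := congrFun₂ (Matrix.one_mul (1 : Matrix (Fin (a + b)) (Fin (a + b)) k)) (Fin.castAdd b r) (Fin.natAdd a c)
      rw [Matrix.mul_apply, Matrix.one_apply_ne (by simp [Fin.ext_iff]; omega)] at h
      rw [Matrix.mul_apply]
      exact h
    · ext r c
      have h := congrFun₂ (Matrix.one_mul (1 : Matrix (Fin (a + b)) (Fin (a + b)) k)) (Fin.natAdd a r) (Fin.castAdd b c)
      rw [Matrix.mul_apply, Matrix.one_apply_ne (by simp [Fin.ext_iff]; omega)] at h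
      rw [Matrix.mul_apply]
      exact h
    · ext r c
      simp only [Matrix.mul_apply, Matrix.one_apply, Matrix.add_apply, Matrix.submatrix_apply, id]
      rw [← Fin.sum_univ_add (f := fun z => (if r = z then (1 : k) else 0) * if z = c then 1 else 0)]
      simp
  choose i j p q hpi hqj hpj hqi hs using fun v => key (A.d v) (B.d v)
  let W : QRep k Q := ⟨fun v => A.d v + B.d v, fun x =>
    i (Q.tgt x) * A.mat x * p (Q.src x) + j (Q.tgt x) * B.mat x * q (Q.src x)⟩
  have hi : ∀ x, W.mat x * i (Q.src x) = i (Q.tgt x) * A.mat x := by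
    intro x
    show (i (Q.tgt x) * A.mat x * p (Q.src x) + j (Q.tgt x) * B.mat x * q (Q.src x)) * i (Q.src x) = _
    rw [Matrix.add_mul, Matrix.mul_assoc, hpi, Matrix.mul_assoc (_ * _), hqi]; simp
  have hj : ∀ x, W.mat x * j (Q.src x) = j (Q.tgt x) * B.mat x := by
    intro x
    show (i (Q.tgt x) * A.mat x * p (Q.src x) + j (Q.tgt x) * B.mat x * q (Q.src x)) * j (Q.src x) = _
    rw [Matrix.add_mul, Matrix.mul_assoc, hpj, Matrix.mul_assoc (_ * _), hqj]; simp
  have hp : ∀ x, p (Q.tgt x) * W.mat x = A.mat x * p (Q.src x) := by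
    intro x
    show p (Q.tgt x) * (i (Q.tgt x) * A.mat x * p (Q.src x) + j (Q.tgt x) * B.mat x * q (Q.src x)) = _
    simp only [Matrix.mul_add, ← Matrix.mul_assoc, hpi, hpj]; simp
  have hq : ∀ x, q (Q.tgt x) * W.mat x = B.mat x * q (Q.src x) := by
    intro x
    show q (Q.tgt x) * (i (Q.tgt x) * A.mat x * p (Q.src x) + j (Q.tgt x) * B.mat x * q (Q.src x)) = _
    simp only [Matrix.mul_add, ← Matrix.mul_assoc, hqi, hqj]; simp
  obtain ⟨hA1, hA2⟩ := hA
  obtain ⟨hB1, hB2⟩ := hB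
  rw [homDim_eq_zero_iff] at hA1 hB1
  rw [extDim_eq_zero_iff] at hA2 hB2
  refine ⟨W, ⟨(homDim_eq_zero_iff _ _).2 ?_, (extDim_eq_zero_iff _ _).2 ?_⟩, fun _ => rfl⟩
  · intro f hf
    have hf' : ∀ x, f (Q.tgt x) * W.mat x = M.mat x * f (Q.src x) := hf
    have h1 := hA1 (fun v => f v * i v) (by
      intro x
      show f (Q.tgt x) * i (Q.tgt x) * A.mat x = M.mat x * (f (Q.src x) * i (Q.src x))
      rw [Matrix.mul_assoc, ← hi, ← Matrix.mul_assoc, hf', Matrix.mul_assoc])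
    have h2 := hB1 (fun v => f v * j v) (by
      intro x
      show f (Q.tgt x) * j (Q.tgt x) * B.mat x = M.mat x * (f (Q.src x) * j (Q.src x))
      rw [Matrix.mul_assoc, ← hj, ← Matrix.mul_assoc, hf', Matrix.mul_assoc])
    funext v
    have h1 : f v * i v = 0 := congrFun h1 v
    have h2 : f v * j v = 0 := congrFun h2 v
    calc f v = f v * (i v * p v + j v * q v) := by rw [hs]; exact (Matrix.mul_one _).symm
      _ = 0 := by rw [Matrix.mul_add, ← Matrix.mul_assoc, ← Matrix.mul_assoc, h1, h2]; simp
  · intro h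
    obtain ⟨u, hu⟩ := hA2 (fun x => h x * i (Q.src x))
    obtain ⟨w, hw⟩ := hB2 (fun x => h x * j (Q.src x))
    have hu' : ∀ x, u (Q.tgt x) * A.mat x - M.mat x * u (Q.src x) = h x * i (Q.src x) :=
      fun x => congrFun hu x
    have hw' : ∀ x, w (Q.tgt x) * B.mat x - M.mat x * w (Q.src x) = h x * j (Q.src x) :=
      fun x => congrFun hw x
    refine ⟨fun v => u v * p v + w v * q v, ?_⟩
    funext x
    show (u (Q.tgt x) * p (Q.tgt x) + w (Q.tgt x) * q (Q.tgt x)) * W.mat x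
      - M.mat x * (u (Q.src x) * p (Q.src x) + w (Q.src x) * q (Q.src x)) = h x
    calc _ = (u (Q.tgt x) * A.mat x - M.mat x * u (Q.src x)) * p (Q.src x)
        + (w (Q.tgt x) * B.mat x - M.mat x * w (Q.src x)) * q (Q.src x) := by
          rw [Matrix.add_mul, Matrix.mul_assoc, Matrix.mul_assoc, hp, hq, Matrix.mul_add,
            Matrix.sub_mul, Matrix.sub_mul]
          simp only [Matrix.mul_assoc]
          abel
      _ = h x * (i (Q.src x) * p (Q.src x) + j (Q.src x) * q (Q.src x)) := by
          rw [hu', hw', Matrix.mul_add, Matrix.mul_assoc, Matrix.mul_assoc]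
      _ = h x := by rw [hs]; exact Matrix.mul_one _

theorem exists_zero (M : QRep k Q) : ∃ W : QRep k Q, LPerp M W ∧ ∀ i, W.d i = 0 := by
  refine ⟨⟨fun _ => 0, fun _ => 0⟩, ⟨(homDim_eq_zero_iff _ _).2 ?_, (extDim_eq_zero_iff _ _).2 ?_⟩,
    fun _ => rfl⟩
  · intro f _
    funext i; ext a b; exact b.elim0
  · intro h
    refine ⟨0, ?_⟩
    funext i; ext a b; exact b.elim0

theorem exists_nsmul (M A : QRep k Q) (hA : LPerp M A) (c : ℕ) :
    ∃ W : QRep k Q, LPerp M W ∧ ∀ i, W.d i = c * A.d i := by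
  induction c with
  | zero => simpa using exists_zero M
  | succ c ih =>
    obtain ⟨W, h1, h2⟩ := ih
    obtain ⟨V, h3, h4⟩ := exists_add M W A h1 hA
    exact ⟨V, h3, fun i => by rw [h4, h2]; ring⟩

end HssAux
namespace HssAux

/-- coefficients of the linear form `⟨d,-⟩`. -/
def kap (Q : FinQuiver) : (Fin Q.n → ℤ) →ₗ[ℤ] (Fin Q.n → ℤ) where
  toFun d j := d j - ∑ x, if Q.tgt x = j then d (Q.src x) else 0
  map_add' d e := by
    funext j
    simp only [Pi.add_apply]
    rw [sub_add_sub_comm, ← Finset.sum_add_distrib]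
    congr 1
    exact Finset.sum_congr rfl fun x _ => by split_ifs <;> simp
  map_smul' c d := by
    funext j
    simp only [Pi.smul_apply, RingHom.id_apply, smul_eq_mul]
    rw [mul_sub, Finset.mul_sum]
    congr 1
    exact Finset.sum_congr rfl fun x _ => by split_ifs <;> simp

theorem euler_eq_kap (Q : FinQuiver) (d e : Fin Q.n → ℤ) :
    Q.euler d e = ∑ j, kap Q d j * e j := by
  simp only [kap, LinearMap.coe_mk, AddHom.coe_mk, sub_mul, Finset.sum_sub_distrib,
    FinQuiver.euler, Finset.sum_mul]
  rw [Finset.sum_comm]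
  congr 1
  refine Finset.sum_congr rfl fun x _ => ?_
  simp

theorem euler_single (Q : FinQuiver) (d : Fin Q.n → ℤ) (j : Fin Q.n) :
    Q.euler d (Pi.single j 1) = kap Q d j := by
  rw [euler_eq_kap]
  simp [Pi.single_apply]

theorem kap_inj (hac : Q.Acyclic) (d : Fin Q.n → ℤ) (h : kap Q d = 0) : d = 0 := by
  obtain ⟨ht, hht⟩ := hac
  have : ∀ N j, ht j = N → d j = 0 := by
    intro N
    induction N using Nat.strong_induction_on with
    | _ N ih =>
      intro j hj
      have h1 : d j - ∑ x, (if Q.tgt x = j then d (Q.src x) else 0) = 0 := congrFun h j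
      rw [Finset.sum_eq_zero, sub_zero] at h1
      · exact h1
      · intro x _
        split_ifs with hx
        · exact ih _ (by rw [← hj, ← hx]; exact hht x) _ rfl
        · rfl
  funext j
  exact this _ j rfl

theorem exists_simple (k : Type) [Field k] (Q : FinQuiver) (j : Fin Q.n) :
    ∃ S : QRep k Q, S.dimVec = Pi.single j 1 ∧ ∀ i, i ≠ j → S.d i = 0 := by
  refine ⟨⟨fun i => if i = j then 1 else 0, fun _ => 0⟩, ?_, ?_⟩
  · funext i
    by_cases h : i = j
    · subst h; simp [dimVec]
    · simp [dimVec, h]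
  · intro i hi
    simp [hi]

theorem kap_zero_of_nonneg (M : QRep k Q) (u : Fin Q.n → ℤ)
    (h0 : Q.euler u M.dimVec = 0) (hn : ∀ j, M.d j ≠ 0 → 0 ≤ kap Q u j) :
    ∀ j, M.d j ≠ 0 → kap Q u j = 0 := by
  intro j hj
  rw [euler_eq_kap, Finset.sum_eq_zero_iff_of_nonneg] at h0
  · have := h0 j (Finset.mem_univ j)
    rcases mul_eq_zero.1 this with h | h
    · exact h
    · exact absurd (by simpa [dimVec] using h) hj
  · intro i _
    by_cases hi : M.d i = 0
    · simp [dimVec, hi]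
    · exact mul_nonneg (hn i hi) (by simp [dimVec])

theorem euler_of_lperp {M W : QRep k Q} (h : LPerp M W) : Q.euler W.dimVec M.dimVec = 0 := by
  rw [euler_eq, h.1, h.2]; rfl

/-- Paths from `i` to `j`, as lists of arrows (last arrow first). -/
def IsPath (Q : FinQuiver) (i : Fin Q.n) : List (Fin Q.a) → Fin Q.n → Prop
  | [], j => i = j
  | x :: l, j => Q.tgt x = j ∧ IsPath Q i l (Q.src x)

theorem isPath_finite (hac : Q.Acyclic) (i j : Fin Q.n) : Finite {l // IsPath Q i l j} := by
  obtain ⟨ht, hht⟩ := hac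
  have h : ∀ l j, IsPath Q i l j → ht i + l.length ≤ ht j := by
    intro l
    induction l with
    | nil => intro j hj; rw [show i = j from hj]; simp
    | cons x l ih =>
      intro j hj
      have h1 := ih _ hj.2
      have h2 := hht x
      rw [hj.1] at h2
      simp only [List.length_cons]
      omega
  have hf : {l | IsPath Q i l j}.Finite := (List.finite_length_le (Fin Q.a) (ht j)).subset (fun l hl => by
      have := h l j hl
      show l.length ≤ ht j
      omega)
  exact hf.to_subtype

/-- splitting a path by its last arrow -/
def pathEquiv (Q : FinQuiver) (i j : Fin Q.n) :
    {l // IsPath Q i l j} ≃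
      {_u : Unit // i = j} ⊕ (Σ x : {x // Q.tgt x = j}, {l // IsPath Q i l (Q.src x.1)}) where
  toFun
    | ⟨[], h⟩ => Sum.inl ⟨(), h⟩
    | ⟨x :: l, h⟩ => Sum.inr ⟨⟨x, h.1⟩, ⟨l, h.2⟩⟩
  invFun
    | Sum.inl u => ⟨[], u.2⟩
    | Sum.inr p => ⟨p.1.1 :: p.2.1, p.1.2, p.2.2⟩
  left_inv := by rintro ⟨_ | ⟨x, l⟩, h⟩ <;> rfl
  right_inv := by rintro (⟨u, h⟩ | ⟨x, l⟩) <;> rfl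

theorem card_path (hac : Q.Acyclic) (i j : Fin Q.n) :
    Nat.card {l // IsPath Q i l j} = (if i = j then 1 else 0) +
      ∑ x, if Q.tgt x = j then Nat.card {l // IsPath Q i l (Q.src x)} else 0 := by
  have := fun j => isPath_finite hac i j
  rw [Nat.card_congr (pathEquiv Q i j), Nat.card_sum, Nat.card_sigma]
  congr 1
  · split_ifs with h
    · have : Unique {_u : Unit // i = j} := ⟨⟨⟨(), h⟩⟩, fun a => rfl⟩
      exact Nat.card_unique
    · have : IsEmpty {_u : Unit // i = j} := ⟨fun a => h a.2⟩
      exact Nat.card_of_isEmpty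
  · rw [← Finset.sum_filter]
    exact (Finset.sum_subtype _ (by simp)
      (fun x => Nat.card {l // IsPath Q i l (Q.src x)})).symm

section proj
variable {i : Fin Q.n} {d : Fin Q.n → ℕ} (e : ∀ j, Fin (d j) ≃ {l // IsPath Q i l j})

/-- matrices of the projective representation at `i` -/
def projMat (k : Type) [Field k] (x : Fin Q.a) :
    Matrix (Fin (d (Q.tgt x))) (Fin (d (Q.src x))) k :=
  Matrix.of fun r c => if (e (Q.tgt x) r).1 = x :: (e (Q.src x) c).1 then 1 else 0

/-- the projective representation at `i` -/
def projRep (k : Type) [Field k] : QRep k Q := ⟨d, projMat e k⟩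

theorem mul_projRep {m : ℕ} (x : Fin Q.a) (f : Matrix (Fin m) (Fin (d (Q.tgt x))) k)
    (a : Fin m) (c : Fin (d (Q.src x))) :
    (f * projMat e k x) a c =
      f a ((e (Q.tgt x)).symm ⟨x :: (e (Q.src x) c).1, rfl, (e (Q.src x) c).2⟩) := by
  rw [Matrix.mul_apply, Finset.sum_eq_single
    ((e (Q.tgt x)).symm ⟨x :: (e (Q.src x) c).1, rfl, (e (Q.src x) c).2⟩)]
  · simp [projMat]
  · intro b _ hb
    have : (e (Q.tgt x) b).1 ≠ x :: (e (Q.src x) c).1 := by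
      intro h
      apply hb
      rw [Equiv.eq_symm_apply]
      exact Subtype.ext h
    simp [projMat, this]
  · simp

theorem projRep_hom_zero (N : QRep k Q) (f : ∀ i, Matrix (Fin (N.d i)) (Fin (d i)) k)
    (hf : f ∈ homSpace (projRep e k) N)
    (h0 : ∀ a, f i a ((e i).symm ⟨[], rfl⟩) = 0) : f = 0 := by
  have hf' : ∀ x, f (Q.tgt x) * projMat e k x = N.mat x * f (Q.src x) := hf
  have key : ∀ l j (hl : IsPath Q i l j) a, f j a ((e j).symm ⟨l, hl⟩) = 0 := by
    intro l
    induction l with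
    | nil =>
      intro j hl a
      obtain rfl : i = j := hl
      exact h0 a
    | cons x l ih =>
      intro j hl a
      obtain ⟨rfl, hl2⟩ := hl
      have h1 := mul_projRep e x (f (Q.tgt x)) a ((e (Q.src x)).symm ⟨l, hl2⟩)
      simp only [Equiv.apply_symm_apply] at h1
      rw [← h1]
      have h2 := congrFun₂ (hf' x) a ((e (Q.src x)).symm ⟨l, hl2⟩)
      refine h2.trans ?_
      rw [Matrix.mul_apply]
      exact Finset.sum_eq_zero fun b _ => by rw [ih, mul_zero]
  funext j
  ext a c
  have := key _ j (e j c).2 a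
  simpa using this

open Classical in
/-- solving the lifting equation along paths -/
noncomputable def liftF (N : QRep k Q)
    (h : ∀ x : Fin Q.a, Matrix (Fin (N.d (Q.tgt x))) (Fin (d (Q.src x))) k) :
    List (Fin Q.a) → ∀ j, Fin (N.d j) → k
  | [], _ => 0
  | x :: l, j => if ht : Q.tgt x = j then
      (if hl : IsPath Q i l (Q.src x) then
        ht ▸ (fun a => (N.mat x).mulVec (liftF N h l (Q.src x)) a
          + h x a ((e (Q.src x)).symm ⟨l, hl⟩)) else 0) else 0

theorem liftF_eq (N : QRep k Q)
    (h : ∀ x : Fin Q.a, Matrix (Fin (N.d (Q.tgt x))) (Fin (d (Q.src x))) k) (x : Fin Q.a) :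
    (Matrix.of fun a c => liftF e N h (e (Q.tgt x) c).1 (Q.tgt x) a) * projMat e k x
      - N.mat x * (Matrix.of fun a c => liftF e N h (e (Q.src x) c).1 (Q.src x) a) = h x := by
  ext a c
  rw [Matrix.sub_apply, mul_projRep, Matrix.mul_apply, Matrix.of_apply, Equiv.apply_symm_apply]
  simp only [liftF, dif_pos, (e (Q.src x) c).2]
  simp [Matrix.mulVec, dotProduct]

theorem projRep_proj : IsProjRep (projRep e k) := by
  intro N
  rw [extDim_eq_zero_iff]
  intro h
  exact ⟨fun j => Matrix.of fun a c => liftF e N h (e j c).1 j a, funext fun x => liftF_eq e N h x⟩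

theorem mul_self_one {m : ℕ} (g : Matrix (Fin m) (Fin m) k) (o : Fin m) (ho : ∀ c, c = o)
    (h : g * g = g) : g o o * g o o = g o o := by
  have h1 := congrFun₂ h o o
  rw [Matrix.mul_apply, Finset.sum_eq_single o] at h1
  · exact h1
  · intro b _ hb; exact absurd (ho b) hb
  · intro hb; exact absurd (Finset.mem_univ _) hb

theorem projRep_indec (hac : Q.Acyclic) : Indec (projRep e k) := by
  obtain ⟨ht, hht⟩ := hac
  have huniq : ∀ l, IsPath Q i l i → l = [] := by
    have h : ∀ l j, IsPath Q i l j → ht i + l.length ≤ ht j := by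
      intro l
      induction l with
      | nil => intro j hj; rw [show i = j from hj]; simp
      | cons x l ih =>
        intro j hj
        have h1 := ih _ hj.2
        have h2 := hht x
        rw [hj.1] at h2
        simp only [List.length_cons]
        omega
    intro l hl
    have := h l i hl
    exact List.length_eq_zero_iff.1 (by omega)
  let o : Fin (d i) := (e i).symm ⟨[], rfl⟩
  have ho : ∀ c : Fin (d i), c = o := by
    intro c
    rw [Equiv.eq_symm_apply]
    exact Subtype.ext (huniq _ (e i c).2)
  refine ⟨⟨i, ?_⟩, ?_⟩
  · intro h
    exact (Fin.cast h o).elim0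
  · intro f hf hid
    have h2 : f i o o * f i o o = f i o o := mul_self_one (f i) o ho (hid i)
    have h3 : f i o o = 0 ∨ f i o o = 1 := by
      have : f i o o * (f i o o - 1) = 0 := by rw [mul_sub, h2]; ring
      rcases mul_eq_zero.1 this with h | h
      · exact Or.inl h
      · exact Or.inr (sub_eq_zero.1 h)
    rcases h3 with h3 | h3
    · left
      apply projRep_hom_zero e _ f hf
      intro a
      rw [ho a]; exact h3
    · right
      rw [← sub_eq_zero]
      apply projRep_hom_zero e _ (f - 1)
      · apply Submodule.sub_mem _ hf
        intro x
        simp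
      · intro a
        rw [ho a]
        show f i o o - (1 : Matrix _ _ k) o o = 0
        rw [Matrix.one_apply_eq, h3, sub_self]

end proj

theorem exists_proj (k : Type) [Field k] (hac : Q.Acyclic) (i : Fin Q.n) :
    ∃ P : QRep k Q, Indec P ∧ IsProjRep P ∧ (∀ N : QRep k Q, N.d i = 0 → LPerp N P) ∧
      kap Q P.dimVec = Pi.single i 1 := by
  have := fun j => isPath_finite hac i j
  let e : ∀ j, Fin (Nat.card {l // IsPath Q i l j}) ≃ {l // IsPath Q i l j} :=
    fun j => (Finite.equivFin _).symm
  refine ⟨projRep e k, projRep_indec e hac, projRep_proj e, fun N hN => ⟨?_, projRep_proj e N⟩, ?_⟩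
  · rw [homDim_eq_zero_iff]
    intro f hf
    apply projRep_hom_zero e N f hf
    intro a
    exact (Fin.cast hN a).elim0
  · funext j
    show ((Nat.card {l // IsPath Q i l j} : ℕ) : ℤ) - ∑ x, (if Q.tgt x = j then
      ((Nat.card {l // IsPath Q i l (Q.src x)} : ℕ) : ℤ) else 0) = _
    rw [card_path hac i j]
    push_cast
    rw [add_sub_cancel_right, Pi.single_apply]
    simp [eq_comm]

theorem inCone_zero {n : ℕ} (S : Set (Fin n → ℚ)) : InCone S 0 := ⟨[], by simp, by simp⟩

theorem inCone_gen {n : ℕ} {S : Set (Fin n → ℚ)} {v} (h : v ∈ S) : InCone S v :=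
  ⟨[(1, v)], by simpa using h, by simp⟩

theorem inCone_add {n : ℕ} {S : Set (Fin n → ℚ)} {v w} (h : InCone S v) (h' : InCone S w) :
    InCone S (v + w) := by
  obtain ⟨l, h1, h2⟩ := h
  obtain ⟨l', h1', h2'⟩ := h'
  refine ⟨l ++ l', ?_, by simp [h2, h2']⟩
  intro p hp
  rcases List.mem_append.1 hp with h | h
  · exact h1 p h
  · exact h1' p h

theorem inCone_smul {n : ℕ} {S : Set (Fin n → ℚ)} {v} (h : InCone S v) (c : ℚ) (hc : 0 ≤ c) :
    InCone S (c • v) := by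
  obtain ⟨l, h1, rfl⟩ := h
  refine ⟨l.map fun p => (c * p.1, p.2), ?_, ?_⟩
  · intro p hp
    obtain ⟨q, hq, rfl⟩ := List.mem_map.1 hp
    exact ⟨mul_nonneg hc (h1 q hq).1, (h1 q hq).2⟩
  · rw [List.smul_sum, List.map_map, List.map_map]
    congr 1
    exact List.map_congr_left fun p _ => by simp [mul_smul]

theorem inCone_sum {n : ℕ} {S : Set (Fin n → ℚ)} {ι : Type} (s : Finset ι) (v : ι → Fin n → ℚ)
    (h : ∀ i ∈ s, InCone S (v i)) : InCone S (∑ i ∈ s, v i) :=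
  Finset.sum_induction v (InCone S) (fun _ _ => inCone_add) (inCone_zero S) h

/-- Objects of the perpendicular category are filtered by relative simples. -/
theorem inCone_lperp (M : QRep k Q) : ∀ (N : ℕ) (W : QRep k Q), tot W = N → LPerp M W →
    InCone (HssGens M) (fun i => (W.d i : ℚ)) := by
  intro N
  induction N using Nat.strong_induction_on with
  | _ N ih =>
    intro W hN hW
    by_cases h0 : ∀ i, W.d i = 0
    · have : (fun i => (W.d i : ℚ)) = 0 := by funext i; simp [h0 i]
      rw [this]; exact inCone_zero _
    · push Not at h0
      obtain ⟨L, ⟨hL, hLp, hL0⟩, hm⟩ := exists_min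
        (fun L : QRep k Q => IsSubrep L W ∧ LPerp M L ∧ ∃ i, L.d i ≠ 0)
        ⟨W, isSubrep_refl W, hW, h0⟩
      obtain ⟨V, hV, hVd⟩ := exists_quot M L W hL hW hLp.1
      have hs : RelSimple M L := by
        refine ⟨hLp, hL0, fun L' hL' hp => ?_⟩
        by_cases hz : ∀ i, L'.d i = 0
        · exact Or.inl hz
        · push Not at hz
          right
          funext i
          have := eq_of_tot hL' (hm L' ⟨isSubrep_trans hL' hL, hp, hz⟩) i
          simp [dimVec, this]
      have ht : tot V + tot L = tot W := by
        unfold tot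
        rw [← Finset.sum_add_distrib]
        exact Finset.sum_congr rfl fun i _ => hVd i
      have hL1 : 0 < tot L := by
        obtain ⟨i, hi⟩ := hL0
        exact lt_of_lt_of_le (Nat.pos_of_ne_zero hi)
          (Finset.single_le_sum (f := L.d) (fun _ _ => Nat.zero_le _) (Finset.mem_univ i))
      have hc := inCone_add (ih (tot V) (by omega) V rfl hV)
        (inCone_gen (S := HssGens M) (v := fun i => (L.d i : ℚ)) (Or.inl ⟨L, hs, rfl⟩))
      convert hc using 1
      funext i
      simp [← hVd i]

theorem backward (hac : Q.Acyclic) (M : QRep k Q) (d : Fin Q.n → ℤ) (h : SemiStableAt d M) :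
    InCone (HssGens M) (fun i => (d i : ℚ)) := by
  obtain ⟨m, hm, V, -, hV, hp⟩ := h
  choose P hPi hPp hPl hPk using exists_proj k hac
  let v : Fin Q.n → ℤ := m • d - V.dimVec
  have hv : v = ∑ i, kap Q v i • (P i).dimVec := by
    rw [← sub_eq_zero]
    apply kap_inj hac
    rw [map_sub, map_sum, sub_eq_zero]
    funext j
    simp only [map_smul, hPk, Finset.sum_apply, Pi.smul_apply, Pi.single_apply, smul_eq_mul]
    simp
  have hs : ∀ j, M.d j ≠ 0 → kap Q v j = 0 := by
    intro j hj
    have := hV (Pi.single j 1) (by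
      intro i hi
      by_cases hij : i = j
      · rw [hij]; exact hj
      · simp [hij] at hi)
    rw [euler_single, euler_single] at this
    simp only [v, map_sub, map_smul, Pi.sub_apply, Pi.smul_apply, smul_eq_mul, this, sub_self]
  have hc : ∀ i, InCone (HssGens M) ((kap Q v i : ℚ) • fun j => ((P i).d j : ℚ)) := by
    intro i
    by_cases hi : M.d i = 0
    · by_cases hn : 0 ≤ kap Q v i
      · exact inCone_smul (inCone_lperp M _ (P i) rfl (hPl i M hi)) _ (by exact_mod_cast hn)
      · have h1 := inCone_smul (inCone_gen (S := HssGens M) (v := fun j => -((P i).d j : ℚ))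
          (Or.inr ⟨P i, hPi i, hPp i, hPl i M hi, rfl⟩)) (-(kap Q v i : ℚ)) (by
            have : (kap Q v i : ℚ) < 0 := by exact_mod_cast not_le.1 hn
            linarith)
        convert h1 using 1
        funext j
        simp
    · rw [hs i hi]
      simpa using inCone_zero _
  have h1 := inCone_smul (inCone_add (inCone_lperp M _ V rfl hp)
    (inCone_sum Finset.univ _ fun i _ => hc i)) ((m : ℚ)⁻¹) (by positivity)
  convert h1 using 1
  funext j
  have h2 := congrFun hv j
  simp only [v, Pi.sub_apply, Pi.smul_apply, smul_eq_mul, Finset.sum_apply, dimVec] at h2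
  have h3 : (m : ℚ) * d j - V.d j = ∑ i, (kap Q v i : ℚ) * ((P i).d j : ℚ) := by
    exact_mod_cast h2
  simp only [Pi.smul_apply, Pi.add_apply, Finset.sum_apply, smul_eq_mul]
  rw [← h3]
  have : (m : ℚ) ≠ 0 := by exact_mod_cast hm.ne'
  field_simp
  ring

theorem clear_denoms (M : QRep k Q) (v : Fin Q.n → ℚ) (h : InCone (HssGens M) v) :
    ∃ m : ℕ, 0 < m ∧ ∃ W : QRep k Q, LPerp M W ∧ ∃ Z : Fin Q.n → ℤ,
      (∀ j, M.d j ≠ 0 → kap Q Z j = 0) ∧ ∀ i, (m : ℚ) * v i = W.d i - Z i := by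
  obtain ⟨l, hl, rfl⟩ := h
  induction l with
  | nil =>
    obtain ⟨W, hW, hd⟩ := exists_zero M
    exact ⟨1, one_pos, W, hW, 0, by simp, by simp [hd]⟩
  | cons p l ih =>
    obtain ⟨m, hm, W, hW, Z, hZ, hmv⟩ := ih fun q hq => hl q (List.mem_cons_of_mem _ hq)
    obtain ⟨hp0, hpg⟩ := hl p List.mem_cons_self
    have hgen : ∃ m : ℕ, 0 < m ∧ ∃ W : QRep k Q, LPerp M W ∧ ∃ Z : Fin Q.n → ℤ,
      (∀ j, M.d j ≠ 0 → kap Q Z j = 0) ∧ ∀ i, (m : ℚ) * (p.1 * p.2 i) = W.d i - Z i := by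
      obtain ⟨a, ha⟩ : ∃ a : ℕ, p.1.num = a := Int.eq_ofNat_of_zero_le (Rat.num_nonneg.2 hp0)
      have hq : (p.1.den : ℚ) * p.1 = a := by
        rw [Rat.den_mul_eq_num, ha]; simp
      rcases hpg with ⟨S, hS, hv⟩ | ⟨P, -, hPp, hPl, hv⟩
      · obtain ⟨W, hW, hd⟩ := exists_nsmul M S hS.1 a
        refine ⟨p.1.den, p.1.den_pos, W, hW, 0, by simp, fun i => ?_⟩
        rw [← mul_assoc, hq, hv, hd]; simp
      · obtain ⟨W, hW, hd⟩ := exists_zero M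
        refine ⟨p.1.den, p.1.den_pos, W, hW, (a : ℤ) • P.dimVec, fun j hj => ?_, fun i => ?_⟩
        · have := kap_zero_of_nonneg M P.dimVec (euler_of_lperp hPl) (fun j _ => by
            obtain ⟨S, hS, -⟩ := exists_simple k Q j
            rw [← euler_single, ← hS, euler_eq, hPp S]
            simp) j hj
          rw [map_smul, Pi.smul_apply, this, smul_zero]
        · rw [← mul_assoc, hq, hv, hd]; simp [dimVec]
    obtain ⟨m', hm', W', hW', Z', hZ', hmv'⟩ := hgen
    obtain ⟨A, hA, hAd⟩ := exists_nsmul M W' hW' m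
    obtain ⟨B, hB, hBd⟩ := exists_nsmul M W hW m'
    obtain ⟨C, hC, hCd⟩ := exists_add M A B hA hB
    refine ⟨m * m', Nat.mul_pos hm hm', C, hC, (m : ℤ) • Z' + (m' : ℤ) • Z, fun j hj => ?_,
      fun i => ?_⟩
    · rw [map_add, map_smul, map_smul, Pi.add_apply, Pi.smul_apply, Pi.smul_apply, hZ j hj,
        hZ' j hj]
      simp
    · have h1 := hmv i
      have h2 := hmv' i
      simp only [List.map_cons, List.sum_cons, Pi.add_apply, Pi.smul_apply, smul_eq_mul, hCd, hAd,
        hBd]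
      push_cast
      linear_combination (m : ℚ) * h2 + (m' : ℚ) * h1

theorem forward (M : QRep k Q) (d : Fin Q.n → ℤ)
    (h : InCone (HssGens M) (fun i => (d i : ℚ))) : SemiStableAt d M := by
  obtain ⟨m, hm, W, hW, Z, hZ, hd⟩ := clear_denoms M _ h
  obtain ⟨U, hU, hUd, hUh⟩ := exists_gen M W
  obtain ⟨V, hV, hVd⟩ := exists_quot M U W hU hW (hUh M fun _ h => h)
  have hsum : V.dimVec + U.dimVec = W.dimVec := by
    funext i
    have := hVd i
    simp only [Pi.add_apply, dimVec]
    exact_mod_cast this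
  have hmd : (m : ℤ) • d = W.dimVec - Z := by
    funext i
    have := hd i
    simp only [Pi.smul_apply, Pi.sub_apply, smul_eq_mul, dimVec]
    exact_mod_cast this
  have heq : U.dimVec = W.dimVec - V.dimVec := by rw [← hsum]; abel
  have hneg : ∀ j, M.d j ≠ 0 → kap Q (-U.dimVec) j = 0 := by
    apply kap_zero_of_nonneg M
    · have h1 := euler_of_lperp hW
      have h2 := euler_of_lperp hV
      rw [euler_eq_kap] at h1 h2 ⊢
      rw [heq, map_neg, map_sub]
      simp only [Pi.neg_apply, Pi.sub_apply, neg_mul, sub_mul, Finset.sum_neg_distrib,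
        Finset.sum_sub_distrib, h1, h2]
      simp
    · intro j hj
      obtain ⟨S, hS, hS0⟩ := exists_simple k Q j
      have h1 : Q.euler U.dimVec S.dimVec = - extDim U S := by
        rw [euler_eq, hUh S fun i hi => hS0 i (by rintro rfl; exact hj hi)]
        simp
      rw [hS, euler_single] at h1
      rw [map_neg, Pi.neg_apply, h1]
      simp
  refine ⟨m, by exact_mod_cast hm, V, ?_, ?_, hV⟩
  · intro i hi hM
    have h1 := hVd i
    have h2 := hUd i hM
    apply hi
    have : V.d i = 0 := by omega
    simp [dimVec, this]
  · intro e he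
    rw [euler_eq_kap, euler_eq_kap, Finset.mul_sum]
    refine Finset.sum_congr rfl fun j _ => ?_
    by_cases hj : e j = 0
    · simp [hj]
    · have hM := he j hj
      have h1 := hneg j hM
      have h2 := hZ j hM
      have h3 := congrFun (congrArg (kap Q) hmd) j
      have h4 := congrFun (congrArg (kap Q) hsum) j
      simp only [map_neg, map_smul, map_sub, map_add, Pi.neg_apply, Pi.smul_apply, Pi.sub_apply,
        Pi.add_apply, smul_eq_mul] at h1 h3 h4
      have : kap Q V.dimVec j = m * kap Q d j := by linarith
      rw [this, mul_assoc]

end HssAux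

/-- for a Dynkin or Euclidean quiver `Q`, a real Schur root `α` and
`d ∈ ℤ^n`, we have `d ∈ H_α^{ss}` iff `M(α)` is `⟨d,−⟩`-semi-stable. -/
theorem mem_Hss_iff_semistable (k : Type) [Field k] [IsAlgClosed k]
    (Q : FinQuiver) (hQ : Q.IsDynkin ∨ Q.IsEuclidean)
    (α : Fin Q.n → ℤ) (hα : IsSchurRoot k Q α) (hreal : Q.euler α α = 1)
    (Mα : QRep k Q) (hMd : Mα.dimVec = α) (hMind : Indec Mα)
    (hMexc : extDim Mα Mα = 0)
    (d : Fin Q.n → ℤ) :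
    InCone (HssGens Mα) (fun i => ((d i : ℚ))) ↔ SemiStableAt d Mα := by

  have hac : Q.Acyclic := by
    rcases hQ with h | h
    · exact h.1
    · exact h.1
  exact ⟨HssAux.forward Mα d, HssAux.backward hac Mα d⟩
end
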